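/- Let a ≥ b ≥ k ≥ 1 with n ≥ a+b. For 1 ≤ i ≤ b set p = i − min(b−k, i), q = min(k, i), and for p ≤ t ≤ q set d_k(a,b,i,t) = 1 − Σ_{j=p}^{t} (−1)^j C(a−k+j, a−k) C(b−k−i+t, t−j). Then the cokernel of γ_k: Λ^a⊗Λ^k⊗Λ^{b−k} → Λ^a⊗Λ^b is isomorphic as a G-module to the Schur module L_{(a,b)} if and only if for every i with 1 ≤ i ≤ b there exists t with p ≤ t ≤ q and d_k(a,b,i,t) ≠ 0. -/

import Mathlib

open TensorProduct

set_option synthInstance.maxHeartbeats 1000000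
set_option maxSynthPendingDepth 3
set_option maxHeartbeats 1000000

noncomputable section

namespace MMS

variable (K : Type) [Field K] [CharZero K] (n : ℕ)

/-- `V = K^n`, the natural module of `G = GL(n,K)`. -/
abbrev V : Type := Fin n → K

/-- `Λ^p`, the `p`-th exterior power of `V`. -/
abbrev Lam (p : ℕ) : Type := ⋀[K]^p (V K n)

/-- The wedge `v_1 ∧ ⋯ ∧ v_p ∈ Λ^p`. -/
def wedge {p : ℕ} (v : Fin p → V K n) : Lam K n p :=
  ⟨ExteriorAlgebra.ιMulti K p v, ExteriorAlgebra.ιMulti_range K p (Set.mem_range_self v)⟩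

/-- Transport along an equality of degrees. -/
def ecast {p q : ℕ} (h : p = q) : Lam K n p ≃ₗ[K] Lam K n q :=
  h ▸ LinearEquiv.refl K (Lam K n p)

/-- `m` is the wedge multiplication map `Λ^p ⊗ Λ^q → Λ^{p+q}`. -/
def IsMulMap (p q : ℕ) (m : Lam K n p ⊗[K] Lam K n q →ₗ[K] Lam K n (p+q)) : Prop :=
  ∀ (v : Fin p → V K n) (w : Fin q → V K n),
    m (wedge K n v ⊗ₜ[K] wedge K n w) = wedge K n (Fin.append v w)

/-- The set of `(p,q)`-shuffles: permutations `σ` of `{1, …, p+q}` which are strictly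
increasing on the first `p` and on the last `q` indices. -/
def shuffles (p q : ℕ) : Finset (Equiv.Perm (Fin (p+q))) :=
  Finset.univ.filter (fun σ =>
    (∀ i j : Fin (p+q), i < j → (j : ℕ) < p → σ i < σ j) ∧
    (∀ i j : Fin (p+q), i < j → p ≤ (i : ℕ) → σ i < σ j))

/-- `D` is the component `Δ_{p,q} : Λ^{p+q} → Λ^p ⊗ Λ^q` of the comultiplication, i.e.
`Δ_{p,q}(v_1 ∧ ⋯ ∧ v_{p+q}) = Σ_σ sgn(σ) (v_{σ(1)} ∧ ⋯ ∧ v_{σ(p)}) ⊗ (v_{σ(p+1)} ∧ ⋯ ∧ v_{σ(p+q)})`,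
the sum being over all `(p,q)`-shuffles. -/
def IsComulMap (p q : ℕ) (D : Lam K n (p+q) →ₗ[K] Lam K n p ⊗[K] Lam K n q) : Prop :=
  ∀ v : Fin (p+q) → V K n,
    D (wedge K n v) =
      ∑ σ ∈ shuffles p q,
        (Equiv.Perm.sign σ : ℤ) •
          (wedge K n (fun i => v (σ (Fin.castAdd q i))) ⊗ₜ[K]
            wedge K n (fun i => v (σ (Fin.natAdd p i))))

variable (mf : ∀ p q : ℕ, Lam K n p ⊗[K] Lam K n q →ₗ[K] Lam K n (p+q))
variable (Df : ∀ p q : ℕ, Lam K n (p+q) →ₗ[K] Lam K n p ⊗[K] Lam K n q)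

/-- The map `δ_t = (m ⊗ 1) ∘ (1 ⊗ Δ_{t,b-t}) : Λ^a ⊗ Λ^b → Λ^{a+t} ⊗ Λ^{b-t}`. -/
def deltaMap (a b t : ℕ) (ht : t ≤ b) :
    Lam K n a ⊗[K] Lam K n b →ₗ[K] Lam K n (a+t) ⊗[K] Lam K n (b-t) :=
  (TensorProduct.map (mf a t) LinearMap.id)
    ∘ₗ (TensorProduct.assoc K (Lam K n a) (Lam K n t) (Lam K n (b-t))).symm.toLinearMap
    ∘ₗ (TensorProduct.map LinearMap.id
        ((Df t (b-t)) ∘ₗ (ecast K n (by omega : b = t + (b-t))).toLinearMap))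

/-- The map `θ_t = (1 ⊗ m) ∘ (Δ_{a-t,t} ⊗ 1) : Λ^a ⊗ Λ^b → Λ^{a-t} ⊗ Λ^{b+t}`. -/
def thetaMap (a b t : ℕ) (ht : t ≤ a) :
    Lam K n a ⊗[K] Lam K n b →ₗ[K] Lam K n (a-t) ⊗[K] Lam K n (b+t) :=
  (TensorProduct.map LinearMap.id
      ((ecast K n (by omega : t + b = b + t)).toLinearMap ∘ₗ mf t b))
    ∘ₗ (TensorProduct.assoc K (Lam K n (a-t)) (Lam K n t) (Lam K n b)).toLinearMap
    ∘ₗ (TensorProduct.map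
        ((Df (a-t) t) ∘ₗ (ecast K n (by omega : a = (a-t) + t)).toLinearMap) LinearMap.id)

/-- The map `Φ_t = θ_t ∘ δ_t : Λ^a ⊗ Λ^b → Λ^a ⊗ Λ^b`. -/
def PhiMap (a b t : ℕ) (hta : t ≤ a) (htb : t ≤ b) :
    Lam K n a ⊗[K] Lam K n b →ₗ[K] Lam K n a ⊗[K] Lam K n b :=
  (TensorProduct.congr (ecast K n (by omega : a + t - t = a))
      (ecast K n (by omega : b - t + t = b))).toLinearMap
    ∘ₗ thetaMap K n mf Df (a+t) (b-t) t (by omega)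
    ∘ₗ deltaMap K n mf Df a b t htb

/-- The map `Φ_t`, extended by `0` to all `t`. -/
def PhiMap' (a b t : ℕ) :
    Lam K n a ⊗[K] Lam K n b →ₗ[K] Lam K n a ⊗[K] Lam K n b :=
  if h : t ≤ a ∧ t ≤ b then PhiMap K n mf Df a b t h.1 h.2 else 0

/-- The map `θ_1 : Λ^{a+1} ⊗ Λ^{b-1} → Λ^a ⊗ Λ^b` (for `b ≥ 1`). -/
def theta1 (a b : ℕ) (hb : 1 ≤ b) :
    Lam K n (a+1) ⊗[K] Lam K n (b-1) →ₗ[K] Lam K n a ⊗[K] Lam K n b :=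
  (TensorProduct.congr (ecast K n (by omega : a + 1 - 1 = a))
      (ecast K n (by omega : b - 1 + 1 = b))).toLinearMap
    ∘ₗ thetaMap K n mf Df (a+1) (b-1) 1 (by omega)

/-- The submodule of relations defining the Schur module `L_{(a,b)}`: the image of
`θ_1` if `b ≥ 1`, and `0` if `b = 0`. -/
def schurRel (a b : ℕ) : Submodule K (Lam K n a ⊗[K] Lam K n b) :=
  if hb : 1 ≤ b then LinearMap.range (theta1 K n mf Df a b hb) else ⊥

/-- The Schur module `L_{(a,b)}`, realized as the cokernel of `θ_1` (in characteristic zero). -/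
abbrev SchurL (a b : ℕ) : Type :=
  (Lam K n a ⊗[K] Lam K n b) ⧸ schurRel K n mf Df a b

/-- The projection `π_{(a,b)} : Λ^a ⊗ Λ^b → L_{(a,b)}`. -/
def schurProj (a b : ℕ) : Lam K n a ⊗[K] Lam K n b →ₗ[K] SchurL K n mf Df a b :=
  (schurRel K n mf Df a b).mkQ

/-- The coefficient `c_t(a,b,i) = C(i,t)·C(a-b+t+i,t)`. -/
def cCoef (a b t i : ℕ) : ℕ := (i.choose t) * ((a-b+t+i).choose t)

/-- The group `G = GL(n,K)`. -/
abbrev GLn : Type := Matrix.GeneralLinearGroup (Fin n) K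

/-- `rho` is the family of natural actions of `G = GL(n,K)` on the exterior powers `Λ^p`
of the natural module `V = K^n`. -/
def IsExtAction (rho : ∀ p : ℕ, GLn K n → (Lam K n p →ₗ[K] Lam K n p)) : Prop :=
  ∀ (p : ℕ) (g : GLn K n) (v : Fin p → V K n),
    rho p g (wedge K n v) =
      wedge K n (fun i => Matrix.toLin' (g : Matrix (Fin n) (Fin n) K) (v i))

/-- The action of `g ∈ GL(n,K)` on `Λ^a ⊗ Λ^b`. -/
def rhoT (rho : ∀ p : ℕ, GLn K n → (Lam K n p →ₗ[K] Lam K n p)) (a b : ℕ) (g : GLn K n) :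
    Lam K n a ⊗[K] Lam K n b →ₗ[K] Lam K n a ⊗[K] Lam K n b :=
  TensorProduct.map (rho a g) (rho b g)

/-- The quotients `M₁ ⧸ N₁` and `M₂ ⧸ N₂` are isomorphic as representations, with respect
to the given actions `ρ₁, ρ₂` on `M₁` and `M₂` (which descend to the quotients). -/
def IsQuotIso {G' : Type} {M₁ M₂ : Type} [AddCommGroup M₁] [Module K M₁]
    [AddCommGroup M₂] [Module K M₂]
    (N₁ : Submodule K M₁) (N₂ : Submodule K M₂)
    (ρ₁ : G' → M₁ →ₗ[K] M₁) (ρ₂ : G' → M₂ →ₗ[K] M₂) : Prop :=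
  ∃ e : (M₁ ⧸ N₁) ≃ₗ[K] (M₂ ⧸ N₂),
    ∀ (g : G') (x : M₁) (y : M₂),
      e (Submodule.Quotient.mk x) = Submodule.Quotient.mk y →
      e (Submodule.Quotient.mk (ρ₁ g x)) = Submodule.Quotient.mk (ρ₂ g y)

/-- The "multiply in pairs" map
`(Λ^{p₁} ⊗ Λ^{q₁}) ⊗ (Λ^{p₂} ⊗ Λ^{q₂}) → Λ^{p₁+p₂} ⊗ Λ^{q₁+q₂}`. -/
def pairMul (p₁ q₁ p₂ q₂ : ℕ) :
    (Lam K n p₁ ⊗[K] Lam K n q₁) ⊗[K] (Lam K n p₂ ⊗[K] Lam K n q₂) →ₗ[K]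
      Lam K n (p₁+p₂) ⊗[K] Lam K n (q₁+q₂) :=
  (TensorProduct.map (mf p₁ p₂) (mf q₁ q₂))
    ∘ₗ (TensorProduct.tensorTensorTensorComm K (Lam K n p₁) (Lam K n q₁)
        (Lam K n p₂) (Lam K n q₂)).toLinearMap

/-- The map `φ_k = (m ⊗ m) ∘ (1 ⊗ τ ⊗ 1) ∘ (Δ_{a-k,k} ⊗ Δ_{k,b-k}) : Λ^a ⊗ Λ^b → Λ^a ⊗ Λ^b`. -/
def phiSmall (a b k : ℕ) (hka : k ≤ a) (hkb : k ≤ b) :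
    Lam K n a ⊗[K] Lam K n b →ₗ[K] Lam K n a ⊗[K] Lam K n b :=
  (TensorProduct.congr (ecast K n (by omega : (a-k) + k = a))
      (ecast K n (by omega : k + (b-k) = b))).toLinearMap
    ∘ₗ pairMul K n mf (a-k) k k (b-k)
    ∘ₗ (TensorProduct.map
        ((Df (a-k) k) ∘ₗ (ecast K n (by omega : a = (a-k) + k)).toLinearMap)
        ((Df k (b-k)) ∘ₗ (ecast K n (by omega : b = k + (b-k))).toLinearMap))

/-- The map `ψ_k = C(b,k)·1 - φ_k : Λ^a ⊗ Λ^b → Λ^a ⊗ Λ^b`. -/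
def psiSmall (a b k : ℕ) (hka : k ≤ a) (hkb : k ≤ b) :
    Lam K n a ⊗[K] Lam K n b →ₗ[K] Lam K n a ⊗[K] Lam K n b :=
  (Nat.choose b k : K) • LinearMap.id - phiSmall K n mf Df a b k hka hkb

/-- The map `β_k = (m ⊗ m) ∘ (1 ⊗ τ ⊗ 1) ∘ (Δ_{a-k,k} ⊗ 1 ⊗ 1) : Λ^a ⊗ (Λ^k ⊗ Λ^{b-k}) → Λ^a ⊗ Λ^b`. -/
def betaMap (a b k : ℕ) (hka : k ≤ a) (hkb : k ≤ b) :
    Lam K n a ⊗[K] (Lam K n k ⊗[K] Lam K n (b-k)) →ₗ[K] Lam K n a ⊗[K] Lam K n b :=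
  (TensorProduct.congr (ecast K n (by omega : (a-k) + k = a))
      (ecast K n (by omega : k + (b-k) = b))).toLinearMap
    ∘ₗ pairMul K n mf (a-k) k k (b-k)
    ∘ₗ (TensorProduct.map
        ((Df (a-k) k) ∘ₗ (ecast K n (by omega : a = (a-k) + k)).toLinearMap)
        LinearMap.id)

/-- The map `γ_k : Λ^a ⊗ (Λ^k ⊗ Λ^{b-k}) → Λ^a ⊗ Λ^b`,
`γ_k(x ⊗ y ⊗ z) = x ⊗ (y ∧ z) - β_k(x ⊗ y ⊗ z)`. -/
def gammaMap (a b k : ℕ) (hka : k ≤ a) (hkb : k ≤ b) :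
    Lam K n a ⊗[K] (Lam K n k ⊗[K] Lam K n (b-k)) →ₗ[K] Lam K n a ⊗[K] Lam K n b :=
  (TensorProduct.map LinearMap.id
      ((ecast K n (by omega : k + (b-k) = b)).toLinearMap ∘ₗ mf k (b-k)))
    - betaMap K n mf Df a b k hka hkb

/-- The quantity `d_k(a,b,t)` (for the given `i`), from Lemma 5.3 of the paper. -/
def dInt (a b k i t : ℕ) : ℤ :=
  1 - ∑ j ∈ Finset.Icc (i - min (b-k) i) t,
        (-1:ℤ)^j * ((a-k+j).choose (a-k) : ℤ) * ((b-k+t-i).choose (t-j) : ℤ)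

end MMS

namespace MMS

/-! Inside the exterior algebra of `V × V`, where `Λ^p ⊗ Λ^q` is the component of bidegree `(p, q)`,
the partial comultiplications become divided powers `f^(r)` and `e^(r)` of the two derivations which
move a vector from one copy of `V` to the other. The image of `θ_1` is then the image of `f`, and it
is filtered by the images of the `f^(i)`. Modulo the images of the deeper `f^(r)`, the map `γ_k`
reaches `1 - (-1)^i C(a-k+i, i)` times every element of the image of `f^(i)`. This coefficient is
nonzero unless `i` is even and `a = k`, so that `γ_k` has the same image as `θ_1` if `k < a` or
`k = 1`. If `k = a = b ≥ 2`, every element of the image of `γ_k` is an eigenvector of the exchange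
of the two copies of `V`, which fails for the image of `f` as soon as `n ≥ a + 2`. -/

section GradedCommutativity

open ExteriorAlgebra LinearMap

variable {R M N : Type*} [CommRing R] [AddCommGroup M] [Module R M] [AddCommGroup N] [Module R N]

theorem map_mem_exteriorPower (g : M →ₗ[R] N) {p : ℕ} {x : ExteriorAlgebra R M}
    (hx : x ∈ ⋀[R]^p M) : map g x ∈ ⋀[R]^p N := by
  have hmap := Submodule.mem_map_of_mem (f := (map g).toLinearMap) hx
  rw [exteriorPower, Submodule.map_pow] at hmap
  have hle : (range (ι R)).map (map g).toLinearMap ≤ range (ι R) := by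
    rintro _ ⟨_, ⟨v, rfl⟩, rfl⟩
    simp
  exact pow_le_pow_left' hle p hmap

theorem ι_mul_of_mem_exteriorPower (v : M) {p : ℕ} {x : ExteriorAlgebra R M} (hx : x ∈ ⋀[R]^p M) :
    ι R v * x = (-1 : R) ^ p • (x * ι R v) := by
  induction hx using Submodule.pow_induction_on_left' with
  | algebraMap r => simp [Algebra.commutes]
  | add x y i _ _ hx hy => rw [mul_add, add_mul, smul_add, hx, hy]
  | mem_mul w hw i x _ hx =>
    obtain ⟨w, rfl⟩ := hw
    have h := ι_add_mul_swap (R := R) v w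
    rw [← mul_assoc, eq_neg_of_add_eq_zero_left h, neg_mul, mul_assoc, hx, mul_smul_comm,
      pow_succ, mul_assoc]
    simp

theorem mul_comm_of_mem_exteriorPower {p q : ℕ} {x y : ExteriorAlgebra R M} (hx : x ∈ ⋀[R]^p M)
    (hy : y ∈ ⋀[R]^q M) : x * y = (-1 : R) ^ (p * q) • (y * x) := by
  induction hx using Submodule.pow_induction_on_left' with
  | algebraMap r => simp [Algebra.commutes]
  | add x z i _ _ hx hz => rw [mul_add, add_mul, smul_add, hx, hz]
  | mem_mul w hw i x _ hx =>
    obtain ⟨w, rfl⟩ := hw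
    rw [mul_assoc, hx, mul_smul_comm, ← mul_assoc, ι_mul_of_mem_exteriorPower w hy,
      smul_mul_assoc, smul_smul, mul_assoc, ← pow_add]
    congr 2
    rw [Nat.succ_eq_add_one]
    ring

end GradedCommutativity

section ExteriorDerivation

open ExteriorAlgebra

variable {R M N : Type*} [CommRing R] [AddCommGroup M] [Module R M] [AddCommGroup N] [Module R N]

/-- The algebra map `x ↦ x + ε δ(x)` into the dual numbers over the exterior algebra, where `δ` is
the derivation extending `φ`. -/
def exteriorDerHom (φ : M →ₗ[R] M) :
    ExteriorAlgebra R M →ₐ[R] TrivSqZeroExt (ExteriorAlgebra R M) (ExteriorAlgebra R M) :=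
  lift R ⟨(TrivSqZeroExt.inlAlgHom R _ _).toLinearMap ∘ₗ ι R +
    (TrivSqZeroExt.inrHom _ _).restrictScalars R ∘ₗ ι R ∘ₗ φ, fun v => by
      ext
      · simp
      · simp [ι_add_mul_swap v (φ v)]⟩

/-- The even derivation of the exterior algebra `Λ M` which extends the endomorphism `φ` of `M`. -/
def exteriorDer (φ : M →ₗ[R] M) : Module.End R (ExteriorAlgebra R M) :=
  (TrivSqZeroExt.sndHom _ _).restrictScalars R ∘ₗ (exteriorDerHom φ).toLinearMap

theorem fst_exteriorDerHom (φ : M →ₗ[R] M) (x : ExteriorAlgebra R M) :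
    (exteriorDerHom φ x).fst = x := by
  suffices h : (TrivSqZeroExt.fstHom R _ _).comp (exteriorDerHom φ) = AlgHom.id R _ from
    DFunLike.congr_fun h x
  ext v
  simp [exteriorDerHom]

@[simp]
theorem exteriorDer_ι (φ : M →ₗ[R] M) (v : M) : exteriorDer φ (ι R v) = ι R (φ v) := by
  simp [exteriorDer, exteriorDerHom]

@[simp]
theorem exteriorDer_algebraMap (φ : M →ₗ[R] M) (r : R) :
    exteriorDer φ (algebraMap R _ r) = 0 := by
  simp [exteriorDer, TrivSqZeroExt.algebraMap_eq_inl']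

theorem exteriorDer_mul (φ : M →ₗ[R] M) (x y : ExteriorAlgebra R M) :
    exteriorDer φ (x * y) = exteriorDer φ x * y + x * exteriorDer φ y := by
  simp [exteriorDer, fst_exteriorDerHom, add_comm]

theorem exteriorDer_map {φ : M →ₗ[R] M} {ψ : N →ₗ[R] N} {g : M →ₗ[R] N} (h : ψ ∘ₗ g = g ∘ₗ φ)
    (x : ExteriorAlgebra R M) : exteriorDer ψ (map g x) = map g (exteriorDer φ x) := by
  induction x using ExteriorAlgebra.induction with
  | algebraMap r => simp
  | ι v => simpa using congrArg (ι R) (LinearMap.congr_fun h v)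
  | mul x y hx hy => simp only [map_mul, exteriorDer_mul, hx, hy, map_add]
  | add x y hx hy => simp only [map_add, hx, hy]

theorem exteriorDer_map_of_comp_eq_zero {ψ : N →ₗ[R] N} {g : M →ₗ[R] N} (h : ψ ∘ₗ g = 0)
    (x : ExteriorAlgebra R M) : exteriorDer ψ (map g x) = 0 := by
  induction x using ExteriorAlgebra.induction with
  | algebraMap r => simp
  | ι v => simpa using congrArg (ι R) (LinearMap.congr_fun h v)
  | mul x y hx hy => simp only [map_mul, exteriorDer_mul, hx, hy, zero_mul, mul_zero, add_zero]
  | add x y hx hy => simp only [map_add, hx, hy, add_zero]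

theorem exteriorDer_ιMulti (φ : M →ₗ[R] M) {m : ℕ} (v : Fin m → M) :
    exteriorDer φ (ιMulti R m v) = ∑ j, ιMulti R m (Function.update v j (φ (v j))) := by
  induction m with
  | zero => simpa using exteriorDer_algebraMap φ 1
  | succ m ih =>
    have head : Matrix.vecTail (Function.update v 0 (φ (v 0))) = Matrix.vecTail v := by
      ext1 j; simp [Matrix.vecTail]
    have tail (j : Fin m) : Matrix.vecTail (Function.update v j.succ (φ (v j.succ))) =
        Function.update (Matrix.vecTail v) j (φ (Matrix.vecTail v j)) := by
      ext1 l
      simp [Matrix.vecTail, Function.update_apply, Fin.succ_inj]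
    simp only [ιMulti_succ_apply, exteriorDer_mul, exteriorDer_ι, ih, Fin.sum_univ_succ, head, tail,
      Finset.mul_sum, Function.update_self, ne_eq, (Fin.succ_ne_zero _).symm,
      not_false_eq_true, Function.update_of_ne]

end ExteriorDerivation

section DividedPowers

variable {K B : Type*} [Field K] [Ring B] [Algebra K B]

variable (K) in
/-- The divided power `x ^ r / r!`. -/
def divPow (x : B) (r : ℕ) : B := (r.factorial : K)⁻¹ • x ^ r

@[simp]
theorem divPow_zero (x : B) : divPow K x 0 = 1 := by simp [divPow]

@[simp]
theorem divPow_one (x : B) : divPow K x 1 = x := by simp [divPow]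

theorem divPow_neg (x : B) (r : ℕ) : divPow K (-x) r = (-1 : K) ^ r • divPow K x r := by
  rw [divPow, divPow, neg_pow, smul_comm, ← smul_one_mul]
  simp [Algebra.smul_def]

variable [CharZero K]

theorem divPow_mul_divPow (x : B) (i j : ℕ) :
    divPow K x i * divPow K x j = ((i + j).choose i : K) • divPow K x (i + j) := by
  rw [divPow, divPow, divPow, smul_mul_smul_comm, ← pow_add, smul_smul]
  congr 1
  rw [Nat.cast_add_choose]
  have hfact := fun m : ℕ => (Nat.cast_ne_zero (R := K)).mpr m.factorial_ne_zero
  field_simp [hfact]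

theorem divPow_add_of_commute {x y : B} (h : Commute x y) (r : ℕ) :
    divPow K (x + y) r =
      ∑ ij ∈ Finset.HasAntidiagonal.antidiagonal r, divPow K x ij.1 * divPow K y ij.2 := by
  rw [divPow, h.add_pow', Finset.smul_sum]
  refine Finset.sum_congr rfl fun ij hij => ?_
  obtain rfl := Finset.HasAntidiagonal.mem_antidiagonal.mp hij
  rw [divPow, divPow, smul_mul_smul_comm, ← Nat.cast_smul_eq_nsmul K, smul_smul,
    Nat.cast_add_choose]
  congr 1
  have hfact := fun m : ℕ => (Nat.cast_ne_zero (R := K)).mpr m.factorial_ne_zero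
  field_simp [hfact]

end DividedPowers

section EndDividedPowers

variable {K A B : Type*} [Field K] [AddCommGroup A] [Module K A]

theorem divPow_apply_of_intertwine [AddCommGroup B] [Module K B] {f : Module.End K A}
    {g : Module.End K B} {μ : A →ₗ[K] B} (h : ∀ x, μ (f x) = g (μ x)) (r : ℕ) (x : A) :
    μ (divPow K f r x) = divPow K g r (μ x) := by
  simp only [divPow, LinearMap.smul_apply, map_smul]
  congr 1
  induction r with
  | zero => simp
  | succ r ih => simp only [pow_succ', Module.End.mul_apply, h, ih]

variable [Ring B] [Algebra K B]

theorem divPow_apply_mul {f : Module.End K B} {y : B} (h : ∀ x, f (x * y) = f x * y) (r : ℕ)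
    (x : B) : divPow K f r (x * y) = divPow K f r x * y :=
  (divPow_apply_of_intertwine (μ := LinearMap.mulRight K y) (fun x => (h x).symm) r x).symm

theorem divPow_derivation_apply_mul [CharZero K] {f : Module.End K B}
    (hf : ∀ x y, f (x * y) = f x * y + x * f y) (r : ℕ) (x y : B) :
    divPow K f r x * y = ∑ ij ∈ Finset.HasAntidiagonal.antidiagonal r,
      (-1 : K) ^ ij.2 • divPow K f ij.1 (x * divPow K f ij.2 y) := by
  set d₁ : Module.End K (B ⊗[K] B) := LinearMap.rTensor B f
  set d₂ : Module.End K (B ⊗[K] B) := LinearMap.lTensor B f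
  have hcomm : Commute (d₁ + d₂) (-d₂) :=
    (Commute.add_left (LinearMap.ext fun t => by
      simp [d₁, d₂, ← LinearMap.comp_apply, LinearMap.rTensor_comp_lTensor,
        LinearMap.lTensor_comp_rTensor]) (Commute.refl d₂)).neg_right
  have hmul (t : B ⊗[K] B) : LinearMap.mul' K B ((d₁ + d₂) t) = f (LinearMap.mul' K B t) := by
    induction t with
    | zero => simp
    | tmul x y => simp [d₁, d₂, hf]
    | add s t hs ht => simp only [map_add, hs, ht]
  have h₁ : divPow K f r x ⊗ₜ y = divPow K d₁ r (x ⊗ₜ[K] y) :=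
    divPow_apply_of_intertwine (μ := (TensorProduct.mk K B B).flip y) (fun _ => rfl) r x
  have h₂ (j : ℕ) : x ⊗ₜ divPow K f j y = divPow K d₂ j (x ⊗ₜ[K] y) :=
    divPow_apply_of_intertwine (μ := TensorProduct.mk K B B x) (fun _ => rfl) j y
  calc divPow K f r x * y
      = LinearMap.mul' K B (divPow K ((d₁ + d₂) + -d₂) r (x ⊗ₜ y)) := by
        rw [add_neg_cancel_right, ← h₁, LinearMap.mul'_apply]
    _ = _ := by
        rw [divPow_add_of_commute hcomm, LinearMap.sum_apply, map_sum]
        refine Finset.sum_congr rfl fun ij _ => ?_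
        rw [Module.End.mul_apply, divPow_apply_of_intertwine hmul, divPow_neg,
          LinearMap.smul_apply, ← h₂, map_smul, map_smul, LinearMap.mul'_apply]

end EndDividedPowers

section SubsetExpansion

theorem sum_powersetCard_sum_insert {α B : Type*} [Fintype α] [DecidableEq α] [AddCommMonoid B]
    (F : Finset α → B) (r : ℕ) :
    ∑ s ∈ Finset.powersetCard r Finset.univ, ∑ j ∈ sᶜ, F (insert j s) =
      (r + 1) • ∑ t ∈ Finset.powersetCard (r + 1) Finset.univ, F t := by
  have hcard : ∀ t ∈ Finset.powersetCard (r + 1) (Finset.univ : Finset α),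
      (r + 1) • F t = ∑ _j ∈ t, F t := fun t ht => by
    rw [Finset.sum_const, Finset.mem_powersetCard_univ.mp ht]
  rw [Finset.smul_sum, Finset.sum_congr rfl hcard, Finset.sum_sigma', Finset.sum_sigma']
  refine Finset.sum_bij' (fun x _ => ⟨insert x.2 x.1, x.2⟩) (fun x _ => ⟨x.1.erase x.2, x.2⟩)
    ?_ ?_ ?_ ?_ fun _ _ => rfl
  all_goals
    rintro ⟨s, j⟩ h
    simp only [Finset.mem_sigma, Finset.mem_powersetCard_univ, Finset.mem_compl] at h
    simp [h]

theorem sum_powersetCard_compl {α B : Type*} [Fintype α] [DecidableEq α] [AddCommMonoid B]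
    (F : Finset α → B) {p q : ℕ} (h : p + q = Fintype.card α) :
    ∑ s ∈ Finset.powersetCard p Finset.univ, F sᶜ =
      ∑ s ∈ Finset.powersetCard q Finset.univ, F s := by
  refine Finset.sum_nbij' compl compl ?_ ?_ (by simp) (by simp) (by simp) <;>
    · intro s
      simp only [Finset.mem_powersetCard_univ, Finset.card_compl]
      omega

open ExteriorAlgebra

variable {K W : Type*} [Field K] [AddCommGroup W] [Module K W]

theorem exteriorDer_ιMulti_piecewise {φ : Module.End K W} {m : ℕ} {v : Fin m → W}
    (h : ∀ j, φ (φ (v j)) = 0) (s : Finset (Fin m)) :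
    exteriorDer φ (ιMulti K m (s.piecewise (φ ∘ v) v)) =
      ∑ j ∈ sᶜ, ιMulti K m ((insert j s).piecewise (φ ∘ v) v) := by
  rw [exteriorDer_ιMulti, ← Finset.sum_add_sum_compl s, Finset.sum_eq_zero, zero_add]
  · refine Finset.sum_congr rfl fun j hj => ?_
    rw [Finset.piecewise_insert, Finset.piecewise_eq_of_notMem _ _ _ (Finset.mem_compl.mp hj)]
    rfl
  · intro j hj
    rw [Finset.piecewise_eq_of_mem _ _ _ hj, Function.comp_apply, h]
    exact AlternatingMap.map_update_zero _ _ _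

theorem divPow_exteriorDer_ιMulti [CharZero K] {φ : Module.End K W} {m : ℕ} {v : Fin m → W}
    (h : ∀ j, φ (φ (v j)) = 0) (r : ℕ) :
    divPow K (exteriorDer φ) r (ιMulti K m v) =
      ∑ s ∈ Finset.powersetCard r Finset.univ, ιMulti K m (s.piecewise (φ ∘ v) v) := by
  induction r with
  | zero => simp
  | succ r ih =>
    have hr : ((r + 1 : ℕ) : K) ≠ 0 := Nat.cast_ne_zero.mpr r.succ_ne_zero
    have hD := LinearMap.congr_fun (divPow_mul_divPow (K := K) (exteriorDer φ) 1 r) (ιMulti K m v)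
    rw [divPow_one, Nat.choose_one_right, add_comm 1 r, Module.End.mul_apply, ih, map_sum,
      Finset.sum_congr rfl fun s _ => exteriorDer_ιMulti_piecewise h s,
      sum_powersetCard_sum_insert fun t => ιMulti K m (t.piecewise (φ ∘ v) v),
      ← Nat.cast_smul_eq_nsmul K, LinearMap.smul_apply] at hD
    exact (smul_right_injective _ hr hD).symm

variable [CharZero K] {U : Type*} [AddCommGroup U] [Module K U] {φ : Module.End K W}
  {g h : U →ₗ[K] W}

theorem sum_piecewise_eq_divPow_left (hφg : φ ∘ₗ g = 0) (hφh : φ ∘ₗ h = g) {m : ℕ} (p : ℕ)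
    (v : Fin m → U) :
    ∑ s ∈ Finset.powersetCard p Finset.univ, ιMulti K m (s.piecewise (g ∘ v) (h ∘ v)) =
      divPow K (exteriorDer φ) p (map h (ιMulti K m v)) := by
  have hφh' (x : U) : φ (h x) = g x := LinearMap.congr_fun hφh x
  rw [map_apply_ιMulti, divPow_exteriorDer_ιMulti fun j => by
    rw [Function.comp_apply, hφh']; exact LinearMap.congr_fun hφg _]
  simp only [Function.comp_def, hφh']

theorem sum_piecewise_eq_divPow_right (hφg : φ ∘ₗ g = h) (hφh : φ ∘ₗ h = 0) {m p q : ℕ}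
    (hm : p + q = m) (v : Fin m → U) :
    ∑ s ∈ Finset.powersetCard p Finset.univ, ιMulti K m (s.piecewise (g ∘ v) (h ∘ v)) =
      divPow K (exteriorDer φ) q (map g (ιMulti K m v)) := by
  rw [← sum_piecewise_eq_divPow_left hφh hφg,
    ← sum_powersetCard_compl _ (hm.trans (Fintype.card_fin m).symm)]
  simp only [Finset.piecewise_compl]

theorem divPow_exteriorDer_map_eq {ψ : Module.End K W} (hφg : φ ∘ₗ g = h) (hφh : φ ∘ₗ h = 0)
    (hψg : ψ ∘ₗ g = 0) (hψh : ψ ∘ₗ h = g) {p q : ℕ} {u : ExteriorAlgebra K U}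
    (hu : u ∈ ⋀[K]^(p + q) U) :
    divPow K (exteriorDer φ) q (map g u) = divPow K (exteriorDer ψ) p (map h u) := by
  rw [← ιMulti_span_fixedDegree] at hu
  induction hu using Submodule.span_induction with
  | mem x hx =>
    obtain ⟨v, rfl⟩ := hx
    rw [← sum_piecewise_eq_divPow_left hψg hψh, ← sum_piecewise_eq_divPow_right hφg hφh rfl]
  | zero => simp only [map_zero]
  | add x y _ _ hx hy => simp only [map_add, hx, hy]
  | smul c x _ hx => simp only [map_smul, hx]

end SubsetExpansion

section Shuffles

/-- The set of the values of a permutation on the first `p` indices. -/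
def firstValues (p q : ℕ) (σ : Equiv.Perm (Fin (p + q))) : Finset (Fin (p + q)) :=
  Finset.univ.image fun i : Fin p => σ (Fin.castAdd q i)

theorem mem_shuffles {p q : ℕ} {σ : Equiv.Perm (Fin (p + q))} :
    σ ∈ shuffles p q ↔ StrictMono (fun i => σ (Fin.castAdd q i)) ∧
      StrictMono (fun i => σ (Fin.natAdd p i)) := by
  simp only [shuffles, Finset.mem_filter, Finset.mem_univ, true_and]
  constructor
  · rintro ⟨h₁, h₂⟩
    exact ⟨fun i j hij => h₁ _ _ (Fin.strictMono_castAdd q hij) (by simp),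
      fun i j hij => h₂ _ _ (Fin.strictMono_natAdd p hij) (by simp)⟩
  · rintro ⟨h₁, h₂⟩
    constructor
    · intro i j hij hj
      exact @h₁ ⟨i, (Fin.lt_def.mp hij).trans hj⟩ ⟨j, hj⟩ hij
    · intro i j hij hi
      have hj : p ≤ j := hi.trans (Fin.lt_def.mp hij).le
      have hi' : i = Fin.natAdd p ⟨i - p, by omega⟩ :=
        Fin.ext (Nat.add_sub_of_le hi).symm
      have hj' : j = Fin.natAdd p ⟨j - p, by omega⟩ :=
        Fin.ext (Nat.add_sub_of_le hj).symm
      rw [hi', hj']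
      refine h₂ ?_
      rw [Fin.lt_def] at hij ⊢
      simp only
      omega

theorem castAdd_mem_firstValues {p q : ℕ} (σ : Equiv.Perm (Fin (p + q))) (i : Fin p) :
    σ (Fin.castAdd q i) ∈ firstValues p q σ :=
  Finset.mem_image_of_mem _ (Finset.mem_univ i)

theorem natAdd_notMem_firstValues {p q : ℕ} (σ : Equiv.Perm (Fin (p + q))) (i : Fin q) :
    σ (Fin.natAdd p i) ∉ firstValues p q σ := by
  simp only [firstValues, Finset.mem_image, Finset.mem_univ, true_and, not_exists]
  intro j h
  have hval := congrArg Fin.val (σ.injective h)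
  rw [Fin.val_castAdd, Fin.val_natAdd] at hval
  omega

theorem firstValues_injOn (p q : ℕ) :
    Set.InjOn (firstValues p q) (shuffles p q : Set (Equiv.Perm (Fin (p + q)))) := by
  intro σ hσ τ hτ h
  rw [Finset.mem_coe, mem_shuffles] at hσ hτ
  have hrange : ∀ ρ : Equiv.Perm (Fin (p + q)),
      Set.range (fun i => ρ (Fin.castAdd q i)) = firstValues p q ρ := by
    intro ρ; ext; simp [firstValues]
  have hrange' : ∀ ρ : Equiv.Perm (Fin (p + q)),
      Set.range (fun i => ρ (Fin.natAdd p i)) = (firstValues p q ρ : Set (Fin (p + q)))ᶜ := by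
    intro ρ
    ext x
    constructor
    · rintro ⟨i, rfl⟩; exact natAdd_notMem_firstValues ρ i
    · intro hx
      obtain ⟨y, rfl⟩ := ρ.surjective x
      induction y using Fin.addCases with
      | left i => exact absurd (castAdd_mem_firstValues ρ i) hx
      | right i => exact ⟨i, rfl⟩
  have h₁ := (hσ.1.range_inj hτ.1).mp (by rw [hrange, hrange, h])
  have h₂ := (hσ.2.range_inj hτ.2).mp (by rw [hrange', hrange', h])
  ext1 y
  induction y using Fin.addCases with
  | left i => exact congrFun h₁ i
  | right i => exact congrFun h₂ i

theorem exists_shuffle {p q : ℕ} (s : Finset (Fin (p + q))) (hs : s.card = p) :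
    ∃ σ ∈ shuffles p q, firstValues p q σ = s := by
  have hs' : sᶜ.card = q := by rw [Finset.card_compl, hs]; simp
  refine ⟨finSumFinEquiv.symm.trans (finSumEquivOfFinset hs hs'), ?_, ?_⟩
  · rw [mem_shuffles]
    constructor
    · simpa using (s.orderEmbOfFin hs).strictMono
    · simpa using (sᶜ.orderEmbOfFin hs').strictMono
  · refine Finset.eq_of_subset_of_card_le ?_ ?_
    · intro x
      simp only [firstValues, Finset.mem_image, Finset.mem_univ, true_and]
      rintro ⟨i, rfl⟩
      simp
    · rw [firstValues, Finset.card_image_of_injective _ ?_]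
      · simp [hs]
      · exact (Equiv.injective _).comp (Fin.castAdd_injective p q)

variable {K W : Type*} [Field K] [AddCommGroup W] [Module K W]

theorem sum_shuffles_ιMulti (p q : ℕ) (F G : Fin (p + q) → W) :
    ∑ σ ∈ shuffles p q, (Equiv.Perm.sign σ : ℤ) •
      (ExteriorAlgebra.ιMulti K p (fun i => F (σ (Fin.castAdd q i))) *
        ExteriorAlgebra.ιMulti K q (fun i => G (σ (Fin.natAdd p i)))) =
    ∑ s ∈ Finset.powersetCard p Finset.univ,
      ExteriorAlgebra.ιMulti K (p + q) (s.piecewise F G) := by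
  refine Finset.sum_nbij (firstValues p q) ?_ (firstValues_injOn p q) ?_ ?_
  · intro σ _
    rw [Finset.mem_powersetCard_univ, firstValues, Finset.card_image_of_injective]
    · simp
    · exact σ.injective.comp (Fin.castAdd_injective p q)
  · intro s hs
    obtain ⟨σ, h₁, h₂⟩ := exists_shuffle s (by simpa using hs)
    exact ⟨σ, h₁, h₂⟩
  · intro σ _
    have h : Fin.append (fun i => F (σ (Fin.castAdd q i))) (fun i => G (σ (Fin.natAdd p i))) =
        ((firstValues p q σ).piecewise F G) ∘ σ := by
      ext1 y
      induction y using Fin.addCases with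
      | left i => simp [Finset.piecewise_eq_of_mem, castAdd_mem_firstValues]
      | right i => simp [Finset.piecewise_eq_of_notMem, natAdd_notMem_firstValues]
    rw [ExteriorAlgebra.ιMulti_mul_ιMulti, h, AlternatingMap.map_perm, Units.smul_def, smul_smul]
    rw [← Units.val_mul, Int.units_mul_self, Units.val_one, one_smul]

end Shuffles

section Coproduct

variable {K : Type} [Field K] {n : ℕ}

theorem coe_ecast {p q : ℕ} (h : p = q) (x : Lam K n p) :
    (ecast K n h x : ExteriorAlgebra K (V K n)) = x := by
  subst h; rfl

theorem lam_hom_ext {M : Type*} [AddCommGroup M] [Module K M] {m : ℕ} {f g : Lam K n m →ₗ[K] M}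
    (h : ∀ v, f (wedge K n v) = g (wedge K n v)) : f = g :=
  exteriorPower.linearMap_ext (AlternatingMap.ext h)

theorem coe_mf {p q : ℕ} {m : Lam K n p ⊗[K] Lam K n q →ₗ[K] Lam K n (p + q)}
    (hm : IsMulMap K n p q m) (x : Lam K n p) (y : Lam K n q) :
    (m (x ⊗ₜ y) : ExteriorAlgebra K (V K n)) = x * y := by
  have h : (TensorProduct.mk K _ _).compr₂ ((Submodule.subtype _) ∘ₗ m) =
      (LinearMap.mul K (ExteriorAlgebra K (V K n))).compl₁₂ (Submodule.subtype _)
        (Submodule.subtype _) := by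
    refine lam_hom_ext fun v => lam_hom_ext fun w => ?_
    simp only [LinearMap.compr₂_apply, TensorProduct.mk_apply, LinearMap.comp_apply, hm v w]
    exact (ExteriorAlgebra.ιMulti_mul_ιMulti _ _).symm
  exact DFunLike.congr_fun (DFunLike.congr_fun h x) y

variable {W : Type*} [AddCommGroup W] [Module K W]

/-- The map `x ⊗ y ↦ Λ(g)(x) ∧ Λ(h)(y)` from `Λ^p ⊗ Λ^q` to the exterior algebra of `W`. -/
def wedgeMap (g h : V K n →ₗ[K] W) (p q : ℕ) :
    Lam K n p ⊗[K] Lam K n q →ₗ[K] ExteriorAlgebra K W :=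
  LinearMap.mul' K _ ∘ₗ TensorProduct.map
    ((ExteriorAlgebra.map g).toLinearMap ∘ₗ Submodule.subtype _)
    ((ExteriorAlgebra.map h).toLinearMap ∘ₗ Submodule.subtype _)

@[simp]
theorem wedgeMap_tmul (g h : V K n →ₗ[K] W) {p q : ℕ} (x : Lam K n p) (y : Lam K n q) :
    wedgeMap g h p q (x ⊗ₜ y) = ExteriorAlgebra.map g x * ExteriorAlgebra.map h y := rfl

variable {p q : ℕ} {D : Lam K n (p + q) →ₗ[K] Lam K n p ⊗[K] Lam K n q}

theorem wedgeMap_comul_wedge (hD : IsComulMap K n p q D) (g h : V K n →ₗ[K] W)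
    (v : Fin (p + q) → V K n) :
    wedgeMap g h p q (D (wedge K n v)) = ∑ s ∈ Finset.powersetCard p Finset.univ,
      ExteriorAlgebra.ιMulti K (p + q) (s.piecewise (g ∘ v) (h ∘ v)) := by
  rw [hD, map_sum, ← sum_shuffles_ιMulti]
  refine Finset.sum_congr rfl fun σ _ => ?_
  rw [map_zsmul, wedgeMap_tmul, wedge, wedge, ExteriorAlgebra.map_apply_ιMulti,
    ExteriorAlgebra.map_apply_ιMulti]
  rfl

variable [CharZero K] {φ : Module.End K W} {g h : V K n →ₗ[K] W}

theorem wedgeMap_comul (hD : IsComulMap K n p q D) (hφg : φ ∘ₗ g = h) (hφh : φ ∘ₗ h = 0)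
    (u : Lam K n (p + q)) :
    wedgeMap g h p q (D u) = divPow K (exteriorDer φ) q (ExteriorAlgebra.map g u) := by
  suffices H : wedgeMap g h p q ∘ₗ D = divPow K (exteriorDer φ) q ∘ₗ
      (ExteriorAlgebra.map g).toLinearMap ∘ₗ Submodule.subtype _ from LinearMap.congr_fun H u
  exact lam_hom_ext fun v => (wedgeMap_comul_wedge hD g h v).trans
    (sum_piecewise_eq_divPow_right hφg hφh rfl v)

end Coproduct

section Polarization

open ExteriorAlgebra LinearMap Finset.HasAntidiagonal

variable {K E : Type*} [Field K] [AddCommGroup E] [Module K E]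

variable (K E) in
/-- The divided power polarization operator `f^(r)` on `Λ(E × E)`: `f` is the derivation which
moves one vector from the first copy of `E` to the second. -/
def lower (r : ℕ) : Module.End K (ExteriorAlgebra K (E × E)) :=
  divPow K (exteriorDer (inr K E E ∘ₗ fst K E E)) r

variable (K E) in
/-- The divided power polarization operator `e^(r)` on `Λ(E × E)`: `e` is the derivation which
moves one vector from the second copy of `E` to the first. -/
def raise (r : ℕ) : Module.End K (ExteriorAlgebra K (E × E)) :=
  divPow K (exteriorDer (inl K E E ∘ₗ snd K E E)) r

local notation "Λ₁" => ExteriorAlgebra.map (LinearMap.inl K E E)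
local notation "Λ₂" => ExteriorAlgebra.map (LinearMap.inr K E E)

@[simp]
theorem lower_zero : lower K E 0 = 1 := divPow_zero _

theorem lower_mul_inr (r : ℕ) (x : ExteriorAlgebra K (E × E)) (y : ExteriorAlgebra K E) :
    lower K E r (x * Λ₂ y) = lower K E r x * Λ₂ y :=
  divPow_apply_mul (fun x => by
    rw [exteriorDer_mul, exteriorDer_map_of_comp_eq_zero (by ext <;> simp), mul_zero, add_zero]) r x

theorem raise_mul_inl (r : ℕ) (x : ExteriorAlgebra K (E × E)) (y : ExteriorAlgebra K E) :
    raise K E r (x * Λ₁ y) = raise K E r x * Λ₁ y :=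
  divPow_apply_mul (fun x => by
    rw [exteriorDer_mul, exteriorDer_map_of_comp_eq_zero (by ext <;> simp), mul_zero, add_zero]) r x

variable [CharZero K]

theorem lower_lower (i j : ℕ) (x : ExteriorAlgebra K (E × E)) :
    lower K E i (lower K E j x) = ((i + j).choose i : K) • lower K E (i + j) x :=
  LinearMap.congr_fun (divPow_mul_divPow (K := K) (exteriorDer (inr K E E ∘ₗ fst K E E)) i j) x

theorem raise_raise (i j : ℕ) (x : ExteriorAlgebra K (E × E)) :
    raise K E i (raise K E j x) = ((i + j).choose i : K) • raise K E (i + j) x :=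
  LinearMap.congr_fun (divPow_mul_divPow (K := K) (exteriorDer (inl K E E ∘ₗ snd K E E)) i j) x

theorem lower_apply_mul (r : ℕ) (x y : ExteriorAlgebra K (E × E)) :
    lower K E r x * y = ∑ ij ∈ antidiagonal r,
      (-1 : K) ^ ij.2 • lower K E ij.1 (x * lower K E ij.2 y) :=
  divPow_derivation_apply_mul (exteriorDer_mul _) r x y

theorem lower_inl_eq_raise_inr {p q : ℕ} {u : ExteriorAlgebra K E} (hu : u ∈ ⋀[K]^(p + q) E) :
    lower K E q (Λ₁ u) = raise K E p (Λ₂ u) :=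
  divPow_exteriorDer_map_eq (by ext <;> simp) (by ext <;> simp) (by ext <;> simp)
    (by ext <;> simp) hu

theorem lower_inl_self {s : ℕ} {u : ExteriorAlgebra K E} (hu : u ∈ ⋀[K]^s E) :
    lower K E s (Λ₁ u) = Λ₂ u := by
  rw [← zero_add s] at hu
  rw [lower_inl_eq_raise_inr hu, raise, divPow_zero, Module.End.one_apply]

theorem lower_inl_eq_zero {s r : ℕ} (hsr : s < r) {u : ExteriorAlgebra K E} (hu : u ∈ ⋀[K]^s E) :
    lower K E r (Λ₁ u) = 0 := by
  obtain ⟨j, rfl⟩ := Nat.exists_eq_add_of_lt hsr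
  have hchoose : ((j + 1 + s).choose (j + 1) : K) ≠ 0 :=
    Nat.cast_ne_zero.mpr (Nat.choose_pos (by omega)).ne'
  have h := lower_lower (j + 1) s (Λ₁ u)
  rw [lower_inl_self hu, lower, divPow, pow_succ, LinearMap.smul_apply, Module.End.mul_apply,
    exteriorDer_map_of_comp_eq_zero (by ext <;> simp), map_zero, smul_zero] at h
  rw [show s + j + 1 = j + 1 + s by omega]
  exact (smul_eq_zero.mp h.symm).resolve_left hchoose

end Polarization

section Bidegree

open ExteriorAlgebra LinearMap

variable {K E : Type*} [Field K] [AddCommGroup E] [Module K E]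

local notation "Λ₁" => ExteriorAlgebra.map (LinearMap.inl K E E)
local notation "Λ₂" => ExteriorAlgebra.map (LinearMap.inr K E E)

variable (K E) in
/-- The component `Λ^p E ⊗ Λ^q E` of bidegree `(p, q)` of `Λ(E × E) = Λ E ⊗ Λ E`. -/
def bidegree (p q : ℕ) : Submodule K (ExteriorAlgebra K (E × E)) :=
  (⋀[K]^p E).map (Λ₁).toLinearMap * (⋀[K]^q E).map (Λ₂).toLinearMap

theorem inl_mul_inr_mem_bidegree {p q : ℕ} {x y : ExteriorAlgebra K E} (hx : x ∈ ⋀[K]^p E)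
    (hy : y ∈ ⋀[K]^q E) : Λ₁ x * Λ₂ y ∈ bidegree K E p q :=
  Submodule.mul_mem_mul (Submodule.mem_map_of_mem hx) (Submodule.mem_map_of_mem hy)

theorem bidegree_le {p q : ℕ} {N : Submodule K (ExteriorAlgebra K (E × E))}
    (h : ∀ x ∈ ⋀[K]^p E, ∀ y ∈ ⋀[K]^q E, Λ₁ x * Λ₂ y ∈ N) :
    bidegree K E p q ≤ N := by
  rw [bidegree, Submodule.mul_le]
  rintro _ ⟨x, hx, rfl⟩ _ ⟨y, hy, rfl⟩
  exact h x hx y hy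

theorem map_pow_exteriorPower (g : E →ₗ[K] E × E) (p : ℕ) :
    (⋀[K]^p E).map (map g).toLinearMap = ((LinearMap.range g).map (ι K)) ^ p := by
  rw [Submodule.map_pow]
  congr 1
  rw [← LinearMap.range_comp, ← LinearMap.range_comp]
  congr 1
  ext1 v
  simp

theorem map_ι_mul_comm {W : Type*} [AddCommGroup W] [Module K W] (P Q : Submodule K W) :
    P.map (ι K) * Q.map (ι K) = Q.map (ι K) * P.map (ι K) := by
  have hle (P Q : Submodule K W) : P.map (ι K) * Q.map (ι K) ≤ Q.map (ι K) * P.map (ι K) := by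
    rw [Submodule.mul_le]
    rintro _ ⟨v, hv, rfl⟩ _ ⟨w, hw, rfl⟩
    rw [eq_neg_of_add_eq_zero_left (ι_add_mul_swap v w)]
    exact neg_mem (Submodule.mul_mem_mul (Submodule.mem_map_of_mem hw)
      (Submodule.mem_map_of_mem hv))
  exact le_antisymm (hle P Q) (hle Q P)

theorem bidegree_mul (p q p' q' : ℕ) :
    bidegree K E p q * bidegree K E p' q' = bidegree K E (p + p') (q + q') := by
  have hcomm : Commute ((⋀[K]^q E).map (Λ₂).toLinearMap) ((⋀[K]^p' E).map (Λ₁).toLinearMap) := by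
    simp only [map_pow_exteriorPower]
    exact (show Commute _ _ from map_ι_mul_comm _ _).pow_pow q p'
  simp only [bidegree]
  rw [hcomm.mul_mul_mul_comm, ← Submodule.map_mul, ← Submodule.map_mul, ← pow_add, ← pow_add]

theorem inl_mem_bidegree {p : ℕ} {x : ExteriorAlgebra K E} (hx : x ∈ ⋀[K]^p E) :
    Λ₁ x ∈ bidegree K E p 0 := by
  simpa using inl_mul_inr_mem_bidegree hx (SetLike.GradedOne.one_mem (A := fun i => ⋀[K]^i E))

theorem inr_mem_bidegree {q : ℕ} {y : ExteriorAlgebra K E} (hy : y ∈ ⋀[K]^q E) :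
    Λ₂ y ∈ bidegree K E 0 q := by
  simpa using inl_mul_inr_mem_bidegree (SetLike.GradedOne.one_mem (A := fun i => ⋀[K]^i E)) hy

theorem mul_mem_bidegree {p q p' q' : ℕ} {x y : ExteriorAlgebra K (E × E)}
    (hx : x ∈ bidegree K E p q) (hy : y ∈ bidegree K E p' q') :
    x * y ∈ bidegree K E (p + p') (q + q') :=
  (bidegree_mul (K := K) (E := E) p q p' q').le (Submodule.mul_mem_mul hx hy)

theorem exteriorDer_inl_mem_bidegree {p : ℕ} {x : ExteriorAlgebra K E} (hx : x ∈ ⋀[K]^(p + 1) E) :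
    exteriorDer (inr K E E ∘ₗ fst K E E) (Λ₁ x) ∈ bidegree K E p 1 := by
  have ι_inr_mem (v : E) : ι K (inr K E E v) ∈ bidegree K E 0 1 := by
    rw [← map_apply_ι]
    exact inr_mem_bidegree (by simp)
  induction p generalizing x with
  | zero =>
    obtain ⟨v, rfl⟩ : x ∈ range (ι K) := by simpa using hx
    simpa using ι_inr_mem v
  | succ p ih =>
    rw [exteriorPower, pow_succ'] at hx
    induction hx using Submodule.mul_induction_on' with
    | mem_mul_mem m hm y hy =>
      obtain ⟨v, rfl⟩ := hm
      rw [map_mul, exteriorDer_mul]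
      refine add_mem ?_ ?_
      · simpa using mul_mem_bidegree (ι_inr_mem v) (inl_mem_bidegree hy)
      · simpa [add_comm] using mul_mem_bidegree
          (inl_mem_bidegree (p := 1) (x := ι K v) (by simp)) (ih hy)
    | add x _ y _ hx hy =>
      simp only [map_add]
      exact add_mem hx hy

theorem exteriorDer_mem_bidegree {p q : ℕ} {x : ExteriorAlgebra K (E × E)}
    (hx : x ∈ bidegree K E (p + 1) q) :
    exteriorDer (inr K E E ∘ₗ fst K E E) x ∈ bidegree K E p (q + 1) := by
  suffices h : bidegree K E (p + 1) q ≤ (bidegree K E p (q + 1)).comap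
    (exteriorDer (inr K E E ∘ₗ fst K E E)) from h hx
  refine bidegree_le fun x hx y hy => ?_
  rw [Submodule.mem_comap, exteriorDer_mul,
    exteriorDer_map_of_comp_eq_zero (g := inr K E E) (by ext <;> simp), mul_zero, add_zero,
    add_comm q]
  simpa only [add_zero] using
    mul_mem_bidegree (exteriorDer_inl_mem_bidegree hx) (inr_mem_bidegree hy)

theorem lower_mem_bidegree {p q r : ℕ} {x : ExteriorAlgebra K (E × E)}
    (hx : x ∈ bidegree K E (p + r) q) : lower K E r x ∈ bidegree K E p (q + r) := by
  refine Submodule.smul_mem _ _ ?_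
  induction r generalizing q x with
  | zero => simpa using hx
  | succ r ih =>
    rw [pow_succ, Module.End.mul_apply, add_comm r, ← add_assoc]
    exact ih (exteriorDer_mem_bidegree hx)

end Bidegree

section GradedTensor

open ExteriorAlgebra LinearMap

variable (K : Type*) [Field K] (E : Type*) [AddCommGroup E] [Module K E]

local notation "Λ₁" => ExteriorAlgebra.map (LinearMap.inl K E E)
local notation "Λ₂" => ExteriorAlgebra.map (LinearMap.inr K E E)
local notation "𝒜" => CliffordAlgebra.evenOdd (0 : QuadraticForm K E)

/-- The algebra map from `Λ(E × E)` to the graded tensor square of `Λ E`. It is obtained from the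
corresponding map of Clifford algebras, as the zero form on `E × E` is only propositionally the
orthogonal sum of the zero forms. -/
def toGradedTensor : ExteriorAlgebra K (E × E) →ₐ[K] (𝒜 ᵍ⊗[K] 𝒜) :=
  (CliffordAlgebra.ofProd (0 : QuadraticForm K E) (0 : QuadraticForm K E)).comp
    (CliffordAlgebra.map ⟨LinearMap.id, by intro m; simp⟩)

theorem toGradedTensor_ι (v w : E) : toGradedTensor K E (ι K (v, w)) =
    GradedTensorProduct.includeLeft 𝒜 𝒜 (ι K v) + GradedTensorProduct.includeRight 𝒜 𝒜 (ι K w) := by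
  have h := CliffordAlgebra.map_apply_ι (Q₁ := (0 : QuadraticForm K (E × E)))
    (Q₂ := (0 : QuadraticForm K E).prod (0 : QuadraticForm K E))
    ⟨LinearMap.id, by intro m; simp⟩ (v, w)
  exact (congrArg _ h).trans (CliffordAlgebra.ofProd_ι_mk 0 0 v w)

theorem toGradedTensor_inl_mul_inr (x y : ExteriorAlgebra K E) :
    toGradedTensor K E (Λ₁ x * Λ₂ y) = GradedTensorProduct.of K 𝒜 𝒜 (x ⊗ₜ y) := by
  have hl : (toGradedTensor K E).comp Λ₁ = GradedTensorProduct.includeLeft 𝒜 𝒜 :=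
    ExteriorAlgebra.hom_ext (LinearMap.ext fun v => by simp [toGradedTensor_ι])
  have hr : (toGradedTensor K E).comp Λ₂ = GradedTensorProduct.includeRight 𝒜 𝒜 :=
    ExteriorAlgebra.hom_ext (LinearMap.ext fun v => by simp [toGradedTensor_ι])
  rw [map_mul, ← AlgHom.comp_apply, ← AlgHom.comp_apply, hl, hr]
  exact GradedTensorProduct.tmul_one_mul_one_tmul 𝒜 𝒜 x y

end GradedTensor

section Embedding

open LinearMap

variable (K : Type) [Field K] (n : ℕ)

/-- The embedding `x ⊗ y ↦ Λ(inl)(x) ∧ Λ(inr)(y)` of `Λ^p ⊗ Λ^q` into the exterior algebra of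
`V × V`; its image is the component of bidegree `(p, q)`. -/
def bidegreeEmb (p q : ℕ) :
    Lam K n p ⊗[K] Lam K n q →ₗ[K] ExteriorAlgebra K (V K n × V K n) :=
  wedgeMap (inl K _ _) (inr K _ _) p q

variable {K n}

local notation "Λ₁" => ExteriorAlgebra.map (LinearMap.inl K (V K n) (V K n))
local notation "Λ₂" => ExteriorAlgebra.map (LinearMap.inr K (V K n) (V K n))

@[simp]
theorem bidegreeEmb_tmul {p q : ℕ} (x : Lam K n p) (y : Lam K n q) :
    bidegreeEmb K n p q (x ⊗ₜ y) = Λ₁ x * Λ₂ y := rfl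

theorem bidegreeEmb_injective (p q : ℕ) : Function.Injective (bidegreeEmb K n p q) := by
  have h : (toGradedTensor K (V K n)).toLinearMap ∘ₗ bidegreeEmb K n p q =
      (GradedTensorProduct.of K _ _).toLinearMap ∘ₗ
        TensorProduct.map (Submodule.subtype _) (Submodule.subtype _) :=
    TensorProduct.ext' fun x y => toGradedTensor_inl_mul_inr K (V K n) x y
  refine Function.Injective.of_comp (f := (toGradedTensor K (V K n)).toLinearMap) ?_
  rw [← LinearMap.coe_comp, h, LinearMap.coe_comp]
  exact (LinearEquiv.injective _).comp (TensorProduct.map_injective_of_flat_flat _ _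
    (Submodule.subtype_injective _) (Submodule.subtype_injective _))

theorem range_bidegreeEmb (p q : ℕ) : range (bidegreeEmb K n p q) = bidegree K (V K n) p q := by
  refine le_antisymm ?_ (bidegree_le fun x hx y hy => ⟨⟨x, hx⟩ ⊗ₜ ⟨y, hy⟩, rfl⟩)
  rintro _ ⟨t, rfl⟩
  induction t with
  | zero => simp
  | tmul x y => exact inl_mul_inr_mem_bidegree x.2 y.2
  | add s t hs ht => rw [map_add]; exact add_mem hs ht

theorem bidegreeEmb_congr_ecast {p q p' q' : ℕ} (hp : p = p') (hq : q = q')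
    (t : Lam K n p ⊗[K] Lam K n q) :
    bidegreeEmb K n p' q' (TensorProduct.congr (ecast K n hp) (ecast K n hq) t) =
      bidegreeEmb K n p q t := by
  subst hp hq
  exact congrArg _ (LinearMap.congr_fun TensorProduct.map_id t)

variable {mf : ∀ p q : ℕ, Lam K n p ⊗[K] Lam K n q →ₗ[K] Lam K n (p + q)}
  {Df : ∀ p q : ℕ, Lam K n (p + q) →ₗ[K] Lam K n p ⊗[K] Lam K n q}

theorem bidegreeEmb_map_assoc (hmf : ∀ p q, IsMulMap K n p q (mf p q)) {p q r : ℕ}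
    (t : Lam K n p ⊗[K] Lam K n q) (w : Lam K n r) :
    bidegreeEmb K n p (q + r) (TensorProduct.map LinearMap.id (mf q r)
      (TensorProduct.assoc K _ _ _ (t ⊗ₜ w))) = bidegreeEmb K n p q t * Λ₂ w := by
  induction t with
  | zero => simp
  | tmul x y => simp [coe_mf (hmf q r), mul_assoc]
  | add s t hs ht => rw [TensorProduct.add_tmul]; simp only [map_add, add_mul, hs, ht]

theorem bidegreeEmb_pairMul (hmf : ∀ p q, IsMulMap K n p q (mf p q)) {p₁ q₁ p₂ q₂ : ℕ}
    (t : Lam K n p₁ ⊗[K] Lam K n q₁) (y : Lam K n p₂) (z : Lam K n q₂) :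
    bidegreeEmb K n (p₁ + p₂) (q₁ + q₂) (pairMul K n mf p₁ q₁ p₂ q₂ (t ⊗ₜ (y ⊗ₜ z))) =
      (-1 : K) ^ (p₂ * q₁) • (bidegreeEmb K n p₁ q₁ t * (Λ₁ y * Λ₂ z)) := by
  induction t with
  | zero => simp
  | tmul x x' =>
    have hswap : Λ₁ y * Λ₂ x' = (-1 : K) ^ (p₂ * q₁) • (Λ₂ x' * Λ₁ y) :=
      mul_comm_of_mem_exteriorPower (map_mem_exteriorPower _ y.2) (map_mem_exteriorPower _ x'.2)
    simp only [pairMul, LinearMap.comp_apply, LinearEquiv.coe_coe,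
      TensorProduct.tensorTensorTensorComm_tmul, TensorProduct.map_tmul, bidegreeEmb_tmul,
      coe_mf (hmf _ _), map_mul]
    rw [mul_assoc, ← mul_assoc (Λ₁ y), hswap, smul_mul_assoc, mul_smul_comm]
    simp only [mul_assoc]
  | add s t hs ht => rw [TensorProduct.add_tmul]; simp only [map_add, add_mul, hs, ht, smul_add]

variable [CharZero K]

theorem bidegreeEmb_comul (hDf : ∀ p q, IsComulMap K n p q (Df p q)) {p q : ℕ}
    (u : Lam K n (p + q)) : bidegreeEmb K n p q (Df p q u) = lower K (V K n) q (Λ₁ u) :=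
  wedgeMap_comul (hDf p q) (by ext <;> simp) (by ext <;> simp) u

theorem bidegreeEmb_theta1 (hmf : ∀ p q, IsMulMap K n p q (mf p q))
    (hDf : ∀ p q, IsComulMap K n p q (Df p q)) {a b : ℕ} (hb : 1 ≤ b)
    (t : Lam K n (a + 1) ⊗[K] Lam K n (b - 1)) :
    bidegreeEmb K n a b (theta1 K n mf Df a b hb t) =
      lower K (V K n) 1 (bidegreeEmb K n (a + 1) (b - 1) t) := by
  induction t with
  | zero => simp
  | add s t hs ht => simp only [map_add, hs, ht]
  | tmul u w =>
    have hsplit (s : Lam K n (a + 1 - 1) ⊗[K] (Lam K n 1 ⊗[K] Lam K n (b - 1))) :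
        TensorProduct.map LinearMap.id ((ecast K n (by omega : 1 + (b - 1) = b - 1 + 1)).toLinearMap
          ∘ₗ mf 1 (b - 1)) s = TensorProduct.congr (ecast K n rfl)
            (ecast K n (by omega : 1 + (b - 1) = b - 1 + 1))
              (TensorProduct.map LinearMap.id (mf 1 (b - 1)) s) := by
      rw [← LinearMap.id_comp LinearMap.id, TensorProduct.map_comp]
      rfl
    simp only [theta1, thetaMap, LinearMap.comp_apply, LinearEquiv.coe_coe,
      TensorProduct.map_tmul, LinearMap.id_apply]
    rw [bidegreeEmb_congr_ecast, hsplit, bidegreeEmb_congr_ecast, bidegreeEmb_map_assoc hmf,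
      bidegreeEmb_comul hDf, coe_ecast, bidegreeEmb_tmul, lower_mul_inr]

theorem bidegreeEmb_gammaMap (hmf : ∀ p q, IsMulMap K n p q (mf p q))
    (hDf : ∀ p q, IsComulMap K n p q (Df p q)) {a b k : ℕ} (hka : k ≤ a) (hkb : k ≤ b)
    (x : Lam K n a) (y : Lam K n k) (z : Lam K n (b - k)) :
    bidegreeEmb K n a b (gammaMap K n mf Df a b k hka hkb (x ⊗ₜ (y ⊗ₜ z))) =
      Λ₁ x * (Λ₂ y * Λ₂ z) -
        (-1 : K) ^ k • (lower K (V K n) k (Λ₁ x) * (Λ₁ y * Λ₂ z)) := by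
  have hsign : (-1 : K) ^ (k * k) = (-1) ^ k := by
    rcases Nat.even_or_odd k with h | h
    · rw [h.neg_one_pow, (h.mul_left k).neg_one_pow]
    · rw [h.neg_one_pow, (h.mul h).neg_one_pow]
  simp only [gammaMap, betaMap, LinearMap.sub_apply, map_sub, LinearMap.comp_apply,
    LinearEquiv.coe_coe, TensorProduct.map_tmul, LinearMap.id_apply]
  rw [bidegreeEmb_congr_ecast, bidegreeEmb_pairMul hmf, bidegreeEmb_comul hDf, coe_ecast,
    bidegreeEmb_tmul, coe_ecast, coe_mf (hmf _ _), map_mul, hsign]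

end Embedding

section Swap

open ExteriorAlgebra LinearMap

variable {K E : Type*} [Field K] [AddCommGroup E] [Module K E]

local notation "Λ₁" => ExteriorAlgebra.map (LinearMap.inl K E E)
local notation "Λ₂" => ExteriorAlgebra.map (LinearMap.inr K E E)

variable (K E) in
/-- The automorphism of `Λ(E × E)` which exchanges the two copies of `E`. -/
def swap : ExteriorAlgebra K (E × E) →ₐ[K] ExteriorAlgebra K (E × E) :=
  ExteriorAlgebra.map (LinearEquiv.prodComm K E E).toLinearMap

theorem map_map_exteriorAlgebra {M N P : Type*} [AddCommGroup M] [Module K M] [AddCommGroup N]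
    [Module K N] [AddCommGroup P] [Module K P] (f : N →ₗ[K] P) (g : M →ₗ[K] N)
    (x : ExteriorAlgebra K M) :
    map f (map g x) = map (f ∘ₗ g) x :=
  DFunLike.congr_fun (map_comp_map g f) x

@[simp]
theorem swap_inl (x : ExteriorAlgebra K E) : swap K E (Λ₁ x) = Λ₂ x := map_map_exteriorAlgebra _ _ x

@[simp]
theorem swap_inr (x : ExteriorAlgebra K E) : swap K E (Λ₂ x) = Λ₁ x := map_map_exteriorAlgebra _ _ x

theorem swap_lower (r : ℕ) (x : ExteriorAlgebra K (E × E)) :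
    swap K E (lower K E r x) = raise K E r (swap K E x) :=
  divPow_apply_of_intertwine (μ := (swap K E).toLinearMap)
    (fun x => (exteriorDer_map (by ext <;> simp) x).symm) r x

theorem map_prodMap_inl (α β : E →ₗ[K] E) (x : ExteriorAlgebra K E) :
    map (prodMap α β) (Λ₁ x) = Λ₁ (map α x) := by
  rw [map_map_exteriorAlgebra, map_map_exteriorAlgebra]
  congr 2; ext <;> simp

theorem map_prodMap_inr (α β : E →ₗ[K] E) (x : ExteriorAlgebra K E) :
    map (prodMap α β) (Λ₂ x) = Λ₂ (map β x) := by
  rw [map_map_exteriorAlgebra, map_map_exteriorAlgebra]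
  congr 2; ext <;> simp

theorem map_prodMap_swap (α β : E →ₗ[K] E) (x : ExteriorAlgebra K (E × E)) :
    map (prodMap α β) (swap K E x) = swap K E (map (prodMap β α) x) := by
  simp only [swap, map_map_exteriorAlgebra]
  congr 2

theorem map_prodMap_self_lower (α : E →ₗ[K] E) (r : ℕ) (x : ExteriorAlgebra K (E × E)) :
    map (prodMap α α) (lower K E r x) = lower K E r (map (prodMap α α) x) :=
  divPow_apply_of_intertwine (μ := (map (prodMap α α)).toLinearMap)
    (fun x => (exteriorDer_map (by ext <;> simp) x).symm) r x

end Swap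

section Filtration

open ExteriorAlgebra LinearMap Finset.HasAntidiagonal

variable {K E : Type*} [Field K] [AddCommGroup E] [Module K E]

local notation "Λ₁" => ExteriorAlgebra.map (LinearMap.inl K E E)
local notation "Λ₂" => ExteriorAlgebra.map (LinearMap.inr K E E)

variable (K E) in
/-- The image of `f^(r) : Λ^{a+r} ⊗ Λ^{b-r} → Λ^a ⊗ Λ^b` inside `Λ(E × E)`. -/
def lowerImage (a b r : ℕ) : Submodule K (ExteriorAlgebra K (E × E)) :=
  (bidegree K E (a + r) (b - r)).map (lower K E r)

variable (K E) in
/-- The image of `γ_k : Λ^a ⊗ Λ^k ⊗ Λ^c → Λ^a ⊗ Λ^{k+c}` inside `Λ(E × E)`. Moving `y` past the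
second factor of `Δ(x)` in `Λ(E × E)` costs the sign `(-1) ^ k`. -/
def gammaImage (a k c : ℕ) : Submodule K (ExteriorAlgebra K (E × E)) :=
  Submodule.span K {t | ∃ x ∈ ⋀[K]^a E, ∃ y ∈ ⋀[K]^k E, ∃ z ∈ ⋀[K]^c E,
    t = Λ₁ x * (Λ₂ y * Λ₂ z) - (-1 : K) ^ k • (lower K E k (Λ₁ x) * (Λ₁ y * Λ₂ z))}

theorem bidegree_add_right_le {p s c : ℕ} {N : Submodule K (ExteriorAlgebra K (E × E))}
    (h : ∀ x ∈ ⋀[K]^p E, ∀ y ∈ ⋀[K]^s E, ∀ z ∈ ⋀[K]^c E, Λ₁ x * (Λ₂ y * Λ₂ z) ∈ N) :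
    bidegree K E p (s + c) ≤ N := by
  refine bidegree_le fun x hx w hw => ?_
  rw [exteriorPower, pow_add] at hw
  induction hw using Submodule.mul_induction_on' with
  | mem_mul_mem y hy z hz => rw [map_mul]; exact h x hx y hy z hz
  | add w _ w' _ hw hw' => rw [map_add, mul_add]; exact add_mem hw hw'

variable [CharZero K]

theorem lowerImage_le_one {a b r : ℕ} (hr : 1 ≤ r) (hrb : r ≤ b) :
    lowerImage K E a b r ≤ lowerImage K E a b 1 := by
  obtain ⟨j, rfl⟩ := Nat.exists_eq_add_of_le hr
  rintro _ ⟨x, hx, rfl⟩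
  have hchoose : ((1 + j).choose 1 : K) ≠ 0 := Nat.cast_ne_zero.mpr (Nat.choose_pos hr).ne'
  rw [← inv_smul_smul₀ hchoose (lower K E (1 + j) x), ← lower_lower]
  refine Submodule.smul_mem _ _ ⟨lower K E j x, ?_, rfl⟩
  rw [SetLike.mem_coe, show b - 1 = b - (1 + j) + j by omega]
  rw [← add_assoc] at hx
  exact lower_mem_bidegree hx

theorem lower_inl_mul_sub_mem {a i s c : ℕ} {N : Submodule K (ExteriorAlgebra K (E × E))}
    (hN : ∀ r, i < r → r ≤ i + s → lowerImage K E a (i + s + c) r ≤ N)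
    {u w z : ExteriorAlgebra K E} (hu : u ∈ ⋀[K]^(a + i) E) (hw : w ∈ ⋀[K]^s E)
    (hz : z ∈ ⋀[K]^c E) :
    lower K E (i + s) (Λ₁ u) * (Λ₁ w * Λ₂ z) -
      (-1 : K) ^ s • lower K E i (Λ₁ u * (Λ₂ w * Λ₂ z)) ∈ N := by
  have hmem : (i, s) ∈ antidiagonal (i + s) := mem_antidiagonal.mpr rfl
  rw [lower_apply_mul, ← Finset.add_sum_erase _ _ hmem, lower_mul_inr, lower_inl_self hw,
    add_sub_cancel_left]
  refine Submodule.sum_mem _ fun ⟨r, j⟩ hrj => Submodule.smul_mem _ _ ?_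
  obtain ⟨hne, hrj⟩ := Finset.mem_erase.mp hrj
  have hsum : r + j = i + s := mem_antidiagonal.mp hrj
  have hjs : j ≠ s := fun h => hne (by rw [h] at hsum ⊢; rw [Nat.add_right_cancel hsum])
  rw [lower_mul_inr]
  rcases hjs.lt_or_gt with hlt | hgt
  · obtain ⟨l, rfl⟩ := Nat.exists_eq_add_of_le' hlt.le
    obtain rfl : r = i + l := by omega
    refine hN _ (by omega) (by omega) ⟨_, ?_, rfl⟩
    rw [SetLike.mem_coe]
    have hwz := mul_mem_bidegree (lower_mem_bidegree (inl_mem_bidegree hw)) (inr_mem_bidegree hz)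
    convert mul_mem_bidegree (inl_mem_bidegree hu) hwz using 2 <;> omega
  · simp [lower_inl_eq_zero hgt hw]

theorem gammaImage_le_lowerImage (a k c : ℕ) :
    gammaImage K E a k c ≤ lowerImage K E a (k + c) 1 := by
  refine Submodule.span_le.mpr ?_
  rintro _ ⟨x, hx, y, hy, z, hz, rfl⟩
  have hmem := lower_inl_mul_sub_mem (i := 0) (N := lowerImage K E a (k + c) 1)
    (fun r hr hrk => by rw [zero_add]; exact lowerImage_le_one hr (by omega)) hx hy hz
  rw [zero_add, lower_zero, Module.End.one_apply] at hmem
  have hsq : (-1 : K) ^ k * (-1) ^ k = 1 := by rw [← mul_pow]; simp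
  convert neg_mem (Submodule.smul_mem _ ((-1 : K) ^ k) hmem) using 1
  rw [smul_sub, smul_smul, hsq, one_smul, neg_sub]
  rfl

theorem mul_sub_raise_swap_mem_gammaImage {m i s c : ℕ} {t : ExteriorAlgebra K (E × E)}
    (ht : t ∈ bidegree K E (m + (i + s)) i) {w z : ExteriorAlgebra K E} (hw : w ∈ ⋀[K]^s E)
    (hz : z ∈ ⋀[K]^c E) :
    t * (Λ₂ w * Λ₂ z) - (-1 : K) ^ (i + s) • (raise K E m (swap K E t) * (Λ₁ w * Λ₂ z)) ∈
      gammaImage K E (m + (i + s)) (i + s) c := by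
  let φ : ExteriorAlgebra K (E × E) →ₗ[K] ExteriorAlgebra K (E × E) :=
    LinearMap.mulRight K (Λ₂ w * Λ₂ z) - (-1 : K) ^ (i + s) •
      LinearMap.mulRight K (Λ₁ w * Λ₂ z) ∘ₗ raise K E m ∘ₗ (swap K E).toLinearMap
  suffices h : bidegree K E (m + (i + s)) i ≤ (gammaImage K E (m + (i + s)) (i + s) c).comap φ from
    h ht
  refine bidegree_le fun x hx y hy => Submodule.subset_span ⟨x, hx, y * w, ?_, z, hz, ?_⟩
  · exact SetLike.GradedMul.mul_mem (A := fun i => ⋀[K]^i E) hy hw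
  · simp [φ, mul_assoc, raise_mul_inl, lower_inl_eq_raise_inr hx]

theorem lowerImage_le_gammaImage_of_ne {m i s c : ℕ} (hi : (1 : K) ≠ (-1) ^ i * (m + i).choose i)
    (hN : ∀ r, i < r → r ≤ i + s → lowerImage K E (m + (i + s)) (i + s + c) r ≤
      gammaImage K E (m + (i + s)) (i + s) c) :
    lowerImage K E (m + (i + s)) (i + s + c) i ≤ gammaImage K E (m + (i + s)) (i + s) c := by
  rw [lowerImage, Submodule.map_le_iff_le_comap, add_assoc i, Nat.add_sub_cancel_left]
  refine bidegree_add_right_le fun u hu w hw z hz => ?_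
  rw [Submodule.mem_comap]
  set t := lower K E i (Λ₁ u * (Λ₂ w * Λ₂ z)) with ht
  have ht' : t = lower K E i (Λ₁ u) * (Λ₂ w * Λ₂ z) := by rw [ht, ← map_mul, lower_mul_inr]
  have hu' : u ∈ ⋀[K]^(m + i + (i + s)) E := by
    rwa [show m + i + (i + s) = m + (i + s) + i by omega]
  have hraise : raise K E m (swap K E (lower K E i (Λ₁ u))) =
      ((m + i).choose i : K) • lower K E (i + s) (Λ₁ u) := by
    rw [swap_lower, swap_inl, raise_raise, lower_inl_eq_raise_inr hu', Nat.choose_symm_add]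
  have hmove := lower_inl_mul_sub_mem hN hu hw hz
  have hgamma := mul_sub_raise_swap_mem_gammaImage (m := m)
    (by simpa using lower_mem_bidegree (inl_mem_bidegree hu)) hw hz
  rw [hraise, ← ht', smul_mul_assoc] at hgamma
  rw [← ht] at hmove
  have hsign : (-1 : K) ^ i = (-1) ^ (i + s) * (-1) ^ s := by
    rw [pow_add, mul_assoc, ← mul_pow]; simp
  have hcomb := add_mem hgamma
    (Submodule.smul_mem _ ((-1 : K) ^ (i + s) * ((m + i).choose i : K)) hmove)
  have hscale : (1 - (-1 : K) ^ i * (m + i).choose i) • t ∈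
      gammaImage K E (m + (i + s)) (i + s) c := by
    convert hcomb using 1
    rw [hsign]
    module
  exact (Submodule.smul_mem_iff _ (sub_ne_zero.mpr hi)).mp hscale

end Filtration

section Comparison

open ExteriorAlgebra LinearMap Module

theorem one_ne_neg_one_pow_mul_choose {m i : ℕ} (h : Odd i ∨ 0 < m ∧ 0 < i) :
    (1 : ℤ) ≠ (-1) ^ i * ((m + i).choose i : ℤ) := by
  rcases Nat.even_or_odd i with hi | hi
  · obtain ⟨hm, hi0⟩ := h.resolve_left (Nat.not_odd_iff_even.mpr hi)
    have hlt : 1 < (m + i).choose i :=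
      calc 1 < (1 + i).choose i := by rw [add_comm, Nat.choose_succ_self_right]; omega
        _ ≤ (m + i).choose i := Nat.choose_le_choose i (by omega)
    rw [hi.neg_one_pow]
    omega
  · rw [hi.neg_one_pow]
    omega

variable {K E : Type*} [Field K] [AddCommGroup E] [Module K E]

local notation "Λ₁" => ExteriorAlgebra.map (LinearMap.inl K E E)
local notation "Λ₂" => ExteriorAlgebra.map (LinearMap.inr K E E)

theorem ιMulti_ne_zero_of_linearIndependent {m : ℕ} {v : Fin m → E} (hv : LinearIndependent K v) :
    ιMulti K m v ≠ 0 := fun h => by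
  refine (exteriorPower.ιMulti_family_linearIndependent_field m hv).ne_zero
    (Set.powersetCard.ofFinEmbEquiv (RelEmbedding.refl _)) (Subtype.ext ?_)
  simpa [ExteriorAlgebra.ιMulti_family] using h

theorem inl_mul_inr_ne_zero {x y : ExteriorAlgebra K E} (hx : x ≠ 0) (hy : y ≠ 0) :
    Λ₁ x * Λ₂ y ≠ 0 := fun h => by
  have htmul := toGradedTensor_inl_mul_inr K E x y
  rw [h, map_zero, eq_comm, LinearEquiv.map_eq_zero_iff] at htmul
  have hx' : LinearIndependent K fun _ : Unit => x := .of_subsingleton () hx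
  have hy' : LinearIndependent K fun _ : Unit => y := .of_subsingleton () hy
  exact (hx'.tmul_of_isDomain hy').ne_zero ((), ()) htmul

theorem exteriorPower_eq_bot [FiniteDimensional K E] {m : ℕ} (hm : finrank K E < m) :
    ⋀[K]^m E = ⊥ := by
  rw [← Submodule.finrank_eq_zero, exteriorPower.finrank_eq, Nat.choose_eq_zero_of_lt hm]

theorem lowerImage_eq_bot [FiniteDimensional K E] {a b r : ℕ} (h : finrank K E < a + r) :
    lowerImage K E a b r = ⊥ := by
  rw [lowerImage, bidegree, exteriorPower_eq_bot h, Submodule.map_bot, Submodule.bot_mul,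
    Submodule.map_bot]

variable [CharZero K]

theorem swap_eq_of_mem_gammaImage {a : ℕ} {t : ExteriorAlgebra K (E × E)}
    (ht : t ∈ gammaImage K E a a 0) : swap K E t = -((-1 : K) ^ a • t) := by
  induction ht using Submodule.span_induction with
  | zero => simp
  | add s t _ _ hs ht => rw [map_add, hs, ht, smul_add, neg_add]
  | smul r t _ ht => rw [map_smul, ht, smul_neg, smul_comm]
  | mem t ht =>
    obtain ⟨x, hx, y, -, z, hz, rfl⟩ := ht
    obtain ⟨r, rfl⟩ : ∃ r, algebraMap K _ r = z := by simpa [Submodule.mem_one] using hz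
    have hsq : (-1 : K) ^ a * (-1) ^ a = 1 := by rw [← mul_pow]; simp
    rw [lower_inl_self hx]
    simp only [map_sub, map_smul, map_mul, swap_inl, swap_inr, AlgHom.commutes, smul_sub,
      smul_smul, hsq, one_smul, neg_sub]

theorem gammaImage_eq_lowerImage [FiniteDimensional K E] {m k c : ℕ} (hk : 1 ≤ k)
    (h : 0 < m ∨ k = 1 ∨ finrank K E < m + k + 2) :
    gammaImage K E (m + k) k c = lowerImage K E (m + k) (k + c) 1 := by
  refine le_antisymm (gammaImage_le_lowerImage _ _ _) ?_
  suffices H : ∀ s i, i + s = k → 1 ≤ i →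
      lowerImage K E (m + k) (k + c) i ≤ gammaImage K E (m + k) k c from
    H (k - 1) 1 (by omega) le_rfl
  intro s
  induction s using Nat.strong_induction_on with
  | _ s ih =>
  rintro i rfl hi
  by_cases hcoef : Odd i ∨ 0 < m ∧ 0 < i
  · refine lowerImage_le_gammaImage_of_ne ?_ fun r hr hrk => ih (i + s - r) (by omega) r (by omega)
      (by omega)
    exact_mod_cast one_ne_neg_one_pow_mul_choose hcoef
  · rw [lowerImage_eq_bot]
    · exact bot_le
    · have hi1 : i ≠ 1 := fun h => hcoef (Or.inl (h ▸ odd_one))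
      omega

theorem map_prodMap_left_eq_zero_of_mem_gammaImage {a : ℕ} {t : ExteriorAlgebra K (E × E)}
    (ht : t ∈ gammaImage K E a a 0) {π : E →ₗ[K] E}
    (hπ : ExteriorAlgebra.map (prodMap LinearMap.id π) t = 0) :
    ExteriorAlgebra.map (prodMap π LinearMap.id) t = 0 := by
  have hswap := map_prodMap_swap π LinearMap.id t
  rwa [swap_eq_of_mem_gammaImage ht, hπ, map_zero, map_neg, neg_eq_zero, map_smul,
    smul_eq_zero_iff_right (pow_ne_zero _ (neg_ne_zero.mpr one_ne_zero))] at hswap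

-- The witness `f(s ∧ v ⊗ w ∧ x)` vanishes when `π` is applied to the second copy of `E`, but not
-- when it is applied to the first.
theorem not_lowerImage_le_gammaImage {a : ℕ} {π : E →ₗ[K] E} {v w : E} {s x : ExteriorAlgebra K E}
    (hs : s ∈ ⋀[K]^(a + 2) E) (hs0 : s ≠ 0) (hπs : ExteriorAlgebra.map π s = s) (hπv : π v = 0)
    (hπw : π w = 0) (hx : x ∈ ⋀[K]^a E) (hvwx : ι K v * (ι K w * x) ≠ 0) :
    ¬ lowerImage K E (a + 2) (a + 2) 1 ≤ gammaImage K E (a + 2) (a + 2) 0 := by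
  intro hle
  have hmap_v : ExteriorAlgebra.map π (ι K v) = 0 := by rw [map_apply_ι, hπv, map_zero]
  have hmap_w : ExteriorAlgebra.map π (ι K w) = 0 := by rw [map_apply_ι, hπw, map_zero]
  let t := lower K E 1 (Λ₁ (s * ι K v) * Λ₂ (ι K w * x))
  have ht : t = lower K E 1 (Λ₁ s) * Λ₁ (ι K v) * Λ₂ (ι K w * x) +
      Λ₁ s * Λ₂ (ι K v * (ι K w * x)) := by
    simp only [t, lower_mul_inr]
    simp [lower, exteriorDer_mul, add_mul, mul_assoc]
  have hmem : t ∈ gammaImage K E (a + 2) (a + 2) 0 := by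
    refine hle ⟨_, inl_mul_inr_mem_bidegree ?_ ?_, rfl⟩
    · exact SetLike.GradedMul.mul_mem (A := fun i => ⋀[K]^i E) hs (by simp)
    · rw [Nat.add_sub_assoc (by omega), add_comm]
      exact SetLike.GradedMul.mul_mem (A := fun i => ⋀[K]^i E) (by simp) hx
  have hleft : ExteriorAlgebra.map (prodMap π LinearMap.id) t =
      Λ₁ s * Λ₂ (ι K v * (ι K w * x)) := by
    simp only [ht, map_add, map_mul, map_prodMap_inl, map_prodMap_inr, hmap_v, hπs, map_zero,
      mul_zero, zero_mul, zero_add, ExteriorAlgebra.map_id, AlgHom.id_apply]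
  have hright : ExteriorAlgebra.map (prodMap LinearMap.id π) t = 0 := by
    simp only [ht, map_add, map_mul, map_prodMap_inr, hmap_v, hmap_w, map_zero, zero_mul, mul_zero,
      add_zero]
  exact inl_mul_inr_ne_zero hs0 hvwx
    (hleft ▸ map_prodMap_left_eq_zero_of_mem_gammaImage hmem hright)

theorem not_lowerImage_le_gammaImage_of_le_finrank [FiniteDimensional K E] {a : ℕ}
    (h : a + 4 ≤ finrank K E) :
    ¬ lowerImage K E (a + 2) (a + 2) 1 ≤ gammaImage K E (a + 2) (a + 2) 0 := by
  let e := finBasis K E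
  let v (i : Fin (a + 4)) : E := e (i.castLE h)
  let π : E →ₗ[K] E := e.constr K fun i => if (i : ℕ) < 2 then 0 else e i
  have hπ (i) : π (v i) = if (i : ℕ) < 2 then 0 else v i := e.constr_basis K _ _
  have hv : LinearIndependent K v := e.linearIndependent.comp _ (Fin.castLE_injective h)
  have hs : LinearIndependent K fun i : Fin (a + 2) => v (i.natAdd 2 |>.cast (by omega)) :=
    hv.comp _ fun i j hij => by simpa using hij
  have hu : LinearIndependent K fun i : Fin (a + 2) => v (i.castLE (by omega)) :=
    hv.comp _ (Fin.castLE_injective _)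
  have hne := ιMulti_ne_zero_of_linearIndependent hu
  rw [ιMulti_succ_apply, ιMulti_succ_apply] at hne
  refine not_lowerImage_le_gammaImage (ιMulti_range K _ ⟨_, rfl⟩)
    (ιMulti_ne_zero_of_linearIndependent hs) (π := π) ?_ ?_ ?_ (ιMulti_range K _ ⟨_, rfl⟩) hne
  · rw [map_apply_ιMulti]
    congr 1
    ext1 i
    simp [hπ]
  · simp [hπ]
  · simp [hπ, Matrix.vecTail]

theorem gammaImage_eq_lowerImage_iff [FiniteDimensional K E] {a k c : ℕ} (hk : 1 ≤ k)
    (hkca : k + c ≤ a) :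
    gammaImage K E a k c = lowerImage K E a (k + c) 1 ↔
      k < a ∨ k = 1 ∨ finrank K E < a + 2 := by
  constructor
  · contrapose!
    rintro ⟨hak, hk1, hfin⟩
    obtain ⟨m, rfl⟩ : ∃ m, k = m + 2 := ⟨k - 2, by omega⟩
    obtain rfl : a = m + 2 := by omega
    obtain rfl : c = 0 := by omega
    exact fun h => not_lowerImage_le_gammaImage_of_le_finrank (by omega) h.ge
  · obtain ⟨m, rfl⟩ := Nat.exists_eq_add_of_le' (show k ≤ a by omega)
    exact fun h => gammaImage_eq_lowerImage hk (by omega)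

end Comparison

section Equivariance

open LinearMap

variable {K : Type} [Field K]

theorem isQuotIso_refl {G' M : Type} [AddCommGroup M] [Module K M]
    {N : Submodule K M} {ρ : G' → M →ₗ[K] M} (h : ∀ g, ∀ z ∈ N, ρ g z ∈ N) :
    IsQuotIso K N N ρ ρ := by
  refine ⟨LinearEquiv.refl K _, fun g x y hxy => ?_⟩
  rw [LinearEquiv.refl_apply, Submodule.Quotient.eq] at hxy ⊢
  rw [← map_sub]
  exact h g _ hxy

theorem IsQuotIso.eq_of_le {G' M : Type} [AddCommGroup M] [Module K M]
    [FiniteDimensional K M] {N₁ N₂ : Submodule K M} {ρ₁ ρ₂ : G' → M →ₗ[K] M}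
    (h : IsQuotIso K N₁ N₂ ρ₁ ρ₂) (hle : N₁ ≤ N₂) : N₁ = N₂ := by
  obtain ⟨e, -⟩ := h
  have h₁ := N₁.finrank_quotient_add_finrank
  have h₂ := N₂.finrank_quotient_add_finrank
  rw [e.finrank_eq] at h₁
  exact Submodule.eq_of_le_of_finrank_eq hle (by omega)

variable {n : ℕ} {rho : ∀ p : ℕ, GLn K n → (Lam K n p →ₗ[K] Lam K n p)}

theorem coe_rho (hrho : IsExtAction K n rho) {p : ℕ} (g : GLn K n) (x : Lam K n p) :
    (rho p g x : ExteriorAlgebra K (V K n)) = ExteriorAlgebra.map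
      (Matrix.toLin' (g : Matrix (Fin n) (Fin n) K)) (x : ExteriorAlgebra K (V K n)) := by
  have h : Submodule.subtype _ ∘ₗ rho p g =
      (ExteriorAlgebra.map (Matrix.toLin' (g : Matrix (Fin n) (Fin n) K))).toLinearMap ∘ₗ
        Submodule.subtype (⋀[K]^p (V K n)) :=
    lam_hom_ext fun v => by
      simp only [LinearMap.comp_apply, hrho p g v]
      exact (ExteriorAlgebra.map_apply_ιMulti _ _).symm
  exact LinearMap.congr_fun h x

theorem bidegreeEmb_rhoT (hrho : IsExtAction K n rho) {a b : ℕ} (g : GLn K n)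
    (t : Lam K n a ⊗[K] Lam K n b) :
    bidegreeEmb K n a b (rhoT K n rho a b g t) =
      ExteriorAlgebra.map (prodMap (Matrix.toLin' (g : Matrix (Fin n) (Fin n) K))
        (Matrix.toLin' (g : Matrix (Fin n) (Fin n) K))) (bidegreeEmb K n a b t) := by
  induction t with
  | zero => simp
  | add s t hs ht => simp only [map_add, hs, ht]
  | tmul x y =>
    rw [rhoT, TensorProduct.map_tmul, bidegreeEmb_tmul, bidegreeEmb_tmul, map_mul, coe_rho hrho,
      coe_rho hrho, map_prodMap_inl, map_prodMap_inr]

end Equivariance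

section Cokernel

open LinearMap

variable {K : Type} [Field K] [CharZero K] {n : ℕ}
  {mf : ∀ p q : ℕ, Lam K n p ⊗[K] Lam K n q →ₗ[K] Lam K n (p + q)}
  {Df : ∀ p q : ℕ, Lam K n (p + q) →ₗ[K] Lam K n p ⊗[K] Lam K n q}
  {rho : ∀ p : ℕ, GLn K n → (Lam K n p →ₗ[K] Lam K n p)}

theorem map_bidegreeEmb_schurRel (hmf : ∀ p q, IsMulMap K n p q (mf p q))
    (hDf : ∀ p q, IsComulMap K n p q (Df p q)) {a b : ℕ} (hb : 1 ≤ b) :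
    (schurRel K n mf Df a b).map (bidegreeEmb K n a b) = lowerImage K (V K n) a b 1 := by
  rw [schurRel, dif_pos hb, lowerImage, ← range_bidegreeEmb, ← LinearMap.range_comp,
    ← LinearMap.range_comp]
  exact congrArg _ (LinearMap.ext (bidegreeEmb_theta1 hmf hDf hb))

theorem map_bidegreeEmb_range_gammaMap (hmf : ∀ p q, IsMulMap K n p q (mf p q))
    (hDf : ∀ p q, IsComulMap K n p q (Df p q)) {a b k : ℕ} (hka : k ≤ a) (hkb : k ≤ b) :
    (range (gammaMap K n mf Df a b k hka hkb)).map (bidegreeEmb K n a b) =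
      gammaImage K (V K n) a k (b - k) := by
  rw [← range_comp]
  refine le_antisymm ?_ (Submodule.span_le.mpr ?_)
  · rintro _ ⟨t, rfl⟩
    induction t with
    | zero => simp
    | add s t hs ht => rw [map_add]; exact add_mem hs ht
    | tmul x t =>
      induction t with
      | zero => simp
      | add s t hs ht => rw [TensorProduct.tmul_add, map_add]; exact add_mem hs ht
      | tmul y z =>
        exact Submodule.subset_span
          ⟨x, x.2, y, y.2, z, z.2, bidegreeEmb_gammaMap hmf hDf hka hkb x y z⟩
  · rintro _ ⟨x, hx, y, hy, z, hz, rfl⟩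
    exact ⟨⟨x, hx⟩ ⊗ₜ (⟨y, hy⟩ ⊗ₜ ⟨z, hz⟩), bidegreeEmb_gammaMap hmf hDf hka hkb _ _ _⟩

theorem range_gammaMap_le_schurRel (hmf : ∀ p q, IsMulMap K n p q (mf p q))
    (hDf : ∀ p q, IsComulMap K n p q (Df p q)) {a b k : ℕ} (hk : 1 ≤ k) (hka : k ≤ a)
    (hkb : k ≤ b) : range (gammaMap K n mf Df a b k hka hkb) ≤ schurRel K n mf Df a b := by
  rw [← Submodule.map_le_map_iff_of_injective (bidegreeEmb_injective a b),
    map_bidegreeEmb_range_gammaMap hmf hDf, map_bidegreeEmb_schurRel hmf hDf (hk.trans hkb)]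
  simpa [hkb] using gammaImage_le_lowerImage (K := K) (E := V K n) a k (b - k)

theorem range_gammaMap_eq_schurRel_iff (hmf : ∀ p q, IsMulMap K n p q (mf p q))
    (hDf : ∀ p q, IsComulMap K n p q (Df p q)) {a b k : ℕ} (hba : b ≤ a) (hk : 1 ≤ k)
    (hkb : k ≤ b) :
    range (gammaMap K n mf Df a b k (hkb.trans hba) hkb) = schurRel K n mf Df a b ↔
      k < a ∨ k = 1 ∨ n < a + 2 := by
  have h := gammaImage_eq_lowerImage_iff (K := K) (E := V K n) (c := b - k) hk
    (show k + (b - k) ≤ a by omega)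
  rwa [Nat.add_sub_of_le hkb, ← map_bidegreeEmb_range_gammaMap hmf hDf (hkb.trans hba) hkb,
    ← map_bidegreeEmb_schurRel hmf hDf (hk.trans hkb),
    (Submodule.map_injective_of_injective (bidegreeEmb_injective a b)).eq_iff,
    Module.finrank_fin_fun] at h

theorem rhoT_mem_schurRel (hmf : ∀ p q, IsMulMap K n p q (mf p q))
    (hDf : ∀ p q, IsComulMap K n p q (Df p q)) (hrho : IsExtAction K n rho) {a b : ℕ} (hb : 1 ≤ b)
    (g : GLn K n) {t : Lam K n a ⊗[K] Lam K n b} (ht : t ∈ schurRel K n mf Df a b) :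
    rhoT K n rho a b g t ∈ schurRel K n mf Df a b := by
  rw [schurRel, dif_pos hb] at ht ⊢
  obtain ⟨s, rfl⟩ := ht
  refine ⟨rhoT K n rho (a + 1) (b - 1) g s, bidegreeEmb_injective a b ?_⟩
  rw [bidegreeEmb_theta1 hmf hDf, bidegreeEmb_rhoT hrho, bidegreeEmb_rhoT hrho,
    bidegreeEmb_theta1 hmf hDf, map_prodMap_self_lower]

theorem isQuotIso_range_gammaMap_schurRel_iff (hmf : ∀ p q, IsMulMap K n p q (mf p q))
    (hDf : ∀ p q, IsComulMap K n p q (Df p q)) (hrho : IsExtAction K n rho) {a b k : ℕ}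
    (hba : b ≤ a) (hk : 1 ≤ k) (hkb : k ≤ b) :
    IsQuotIso K (range (gammaMap K n mf Df a b k (hkb.trans hba) hkb)) (schurRel K n mf Df a b)
        (rhoT K n rho a b) (rhoT K n rho a b) ↔
      k < a ∨ k = 1 ∨ n < a + 2 := by
  rw [← range_gammaMap_eq_schurRel_iff hmf hDf hba hk hkb]
  refine ⟨fun h => h.eq_of_le (range_gammaMap_le_schurRel hmf hDf hk _ _), fun h => ?_⟩
  rw [h]
  exact isQuotIso_refl fun g _ => rhoT_mem_schurRel hmf hDf hrho (hk.trans hkb) g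

end Cokernel

section Coefficients

variable {a b k i : ℕ}

theorem dInt_self {t : ℕ} (ht : i - min (b - k) i = t) :
    dInt a b k i t = 1 - (-1) ^ t * ((a - k + t).choose t : ℤ) := by
  rw [dInt, ht, Finset.Icc_self, Finset.sum_singleton, Nat.choose_symm_add, Nat.sub_self,
    Nat.choose_zero_right, Nat.cast_one, mul_one]

theorem dInt_one (hkb : k ≤ b) (hba : b ≤ a) (hi : i ≤ b - k) :
    dInt a b k i 1 = a - b + i + 1 := by
  rw [dInt, show i - min (b - k) i = 0 by omega, Finset.sum_Icc_succ_top zero_le_one,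
    Finset.Icc_self, Finset.sum_singleton]
  simp only [add_zero, zero_add, pow_zero, pow_one, Nat.sub_zero, Nat.sub_self, Nat.choose_self,
    Nat.choose_one_right, Nat.choose_zero_right, Nat.choose_succ_self_right]
  omega

theorem exists_dInt_ne_zero (hba : b ≤ a) (hk : 1 ≤ k) (hkb : k ≤ b) (h : k < a ∨ k = 1)
    (hi : 1 ≤ i) (hib : i ≤ b) :
    ∃ t : ℕ, i - min (b - k) i ≤ t ∧ t ≤ min k i ∧ dInt a b k i t ≠ 0 := by
  rcases le_or_gt i (b - k) with hle | hlt
  · refine ⟨1, by omega, by omega, ?_⟩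
    rw [dInt_one hkb hba hle]
    omega
  · refine ⟨i - min (b - k) i, le_rfl, by omega, ?_⟩
    rw [dInt_self rfl, sub_ne_zero]
    refine one_ne_neg_one_pow_mul_choose (h.symm.imp (fun hk1 => ?_) fun hka => by omega)
    rw [show i - min (b - k) i = 1 by omega]
    exact odd_one

theorem forall_exists_dInt_ne_zero_iff (hba : b ≤ a) (hk : 1 ≤ k) (hkb : k ≤ b) :
    (∀ i : ℕ, 1 ≤ i → i ≤ b →
      ∃ t : ℕ, i - min (b - k) i ≤ t ∧ t ≤ min k i ∧ dInt a b k i t ≠ 0) ↔ k < a ∨ k = 1 := by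
  refine ⟨fun hd => ?_, fun h i => exists_dInt_ne_zero hba hk hkb h⟩
  by_contra! h
  obtain rfl : k = a := by omega
  obtain rfl : k = b := by omega
  obtain ⟨t, ht, ht', hdt⟩ := hd 2 one_le_two (by omega)
  obtain rfl : t = 2 := by omega
  exact hdt (by simp [dInt_self (show 2 - min (k - k) 2 = 2 by omega)])

end Coefficients

theorem statement10_general (K : Type) [Field K] [CharZero K] (n : ℕ)
    (a b k : ℕ) (hba : b ≤ a) (hk1 : 1 ≤ k) (hkb : k ≤ b)
    (mf : ∀ p q : ℕ, Lam K n p ⊗[K] Lam K n q →ₗ[K] Lam K n (p+q))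
    (Df : ∀ p q : ℕ, Lam K n (p+q) →ₗ[K] Lam K n p ⊗[K] Lam K n q)
    (hmf : ∀ p q, IsMulMap K n p q (mf p q))
    (hDf : ∀ p q, IsComulMap K n p q (Df p q))
    (rho : ∀ p : ℕ, GLn K n → (Lam K n p →ₗ[K] Lam K n p))
    (hrho : IsExtAction K n rho) :
    IsQuotIso K
        (LinearMap.range (gammaMap K n mf Df a b k (hkb.trans hba) hkb))
        (schurRel K n mf Df a b)
        (rhoT K n rho a b) (rhoT K n rho a b) ↔
      (∀ i : ℕ, 1 ≤ i → i ≤ b →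
        ∃ t : ℕ, i - min (b-k) i ≤ t ∧ t ≤ min k i ∧ dInt a b k i t ≠ 0) ∨ n < a + 2 := by
  rw [forall_exists_dInt_ne_zero_iff hba hk1 hkb, or_assoc]
  exact isQuotIso_range_gammaMap_schurRel_iff hmf hDf hrho hba hk1 hkb

/-- Lemma 5.3 of the paper: for `a ≥ b ≥ k ≥ 1` and `n ≥ a+b`,
`coker(γ_k) ≅ L_{(a,b)}` as `G`-modules iff for every `1 ≤ i ≤ b` there is
`p ≤ t ≤ q` (where `p = i − min(b−k,i)` and `q = min(k,i)`) with `d_k(a,b,t) ≠ 0`. -/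
theorem statement10 (K : Type) [Field K] [CharZero K] (n : ℕ)
    (a b k : ℕ) (hba : b ≤ a) (hk1 : 1 ≤ k) (hkb : k ≤ b) (hn : a + b ≤ n)
    (mf : ∀ p q : ℕ, Lam K n p ⊗[K] Lam K n q →ₗ[K] Lam K n (p+q))
    (Df : ∀ p q : ℕ, Lam K n (p+q) →ₗ[K] Lam K n p ⊗[K] Lam K n q)
    (hmf : ∀ p q, IsMulMap K n p q (mf p q))
    (hDf : ∀ p q, IsComulMap K n p q (Df p q))
    (rho : ∀ p : ℕ, GLn K n → (Lam K n p →ₗ[K] Lam K n p))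
    (hrho : IsExtAction K n rho) :
    IsQuotIso K
        (LinearMap.range (gammaMap K n mf Df a b k (hkb.trans hba) hkb))
        (schurRel K n mf Df a b)
        (rhoT K n rho a b) (rhoT K n rho a b) ↔
      ∀ i : ℕ, 1 ≤ i → i ≤ b →
        ∃ t : ℕ, i - min (b-k) i ≤ t ∧ t ≤ min k i ∧ dInt a b k i t ≠ 0 := by
  rw [statement10_general K n a b k hba hk1 hkb mf Df hmf hDf rho hrho, or_iff_left_iff_imp,
    forall_exists_dInt_ne_zero_iff hba hk1 hkb]
  omega

end MMS
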